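/- arXiv:0908.4024 — 3 statements merged into one kernel-verified Lean document; each statement's English description precedes it below -/
import Mathlib

section
/- Let L and n be positive integers, let N, U, V, R, r be positive real numbers, and let φ_1, …, φ_L be entire functions on ℂ^n. Set W = N + U + V and assume W ≥ 12 n², e ≤ R/r ≤ e^{W/6}, Σ_{λ=1}^{L} |φ_λ|_R ≤ e^U, and (2W)^{n+1} ≤ L N (log(R/r))^n. Then there exist rational integers p_1, …, p_L with 0 < max_{1 ≤ λ ≤ L} |p_λ| ≤ e^N such that the function F = p_1 φ_1 + ⋯ + p_L φ_L satisfies |F|_r ≤ e^{−V}. -/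
/-- `|f|_R`: supremum of `|f z|` over the polydisc `max_i |z_i| ≤ R`. -/
noncomputable def PolydiscSup (n : ℕ) (f : (Fin n → ℂ) → ℂ) (R : ℝ) : ℝ :=
  sSup ((fun z => ‖f z‖) '' {z : Fin n → ℂ | ∀ i, ‖z i‖ ≤ R})

section AuxiliaryLemmas

open MeasureTheory Metric Set

/-- **Thue–Siegel lemma**: a box-principle bound for real linear forms at integer points. -/
lemma exists_int_abs_sum_mul_le {ι κ : Type*} [Fintype ι] [Fintype κ]
    (A : κ → ι → ℝ) (P : ℕ) {M η : ℝ} (hη : 0 < η) (hA : ∀ k, ∑ i, |A k i| ≤ M)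
    (hcard : (2 * (P * M) / η + 2) ^ Fintype.card κ < ((P : ℝ) + 1) ^ Fintype.card ι) :
    ∃ p : ι → ℤ, p ≠ 0 ∧ (∀ i, (p i).natAbs ≤ P) ∧ ∀ k, |∑ i, (p i : ℝ) * A k i| ≤ η := by
  classical
  set X : ℝ := P * M with hX
  let s : Finset (ι → ℤ) := Fintype.piFinset fun _ => Finset.Icc (0 : ℤ) P
  let t : Finset (κ → ℤ) := Fintype.piFinset fun _ => Finset.Icc ⌊-X / η⌋ ⌊X / η⌋
  let g : (ι → ℤ) → κ → ℤ := fun p k => ⌊(∑ i, (p i : ℝ) * A k i) / η⌋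
  have hbound : ∀ p ∈ s, ∀ k, |∑ i, (p i : ℝ) * A k i| ≤ X := by
    intro p hp k
    have hp' : ∀ i, 0 ≤ p i ∧ p i ≤ P := fun i => by
      simpa using (Fintype.mem_piFinset.1 hp) i
    calc |∑ i, (p i : ℝ) * A k i| ≤ ∑ i, |(p i : ℝ) * A k i| := Finset.abs_sum_le_sum_abs _ _
      _ ≤ ∑ i, (P : ℝ) * |A k i| := by
          refine Finset.sum_le_sum fun i _ => ?_
          rw [abs_mul]
          gcongr
          rw [abs_of_nonneg (by exact_mod_cast (hp' i).1)]
          exact_mod_cast (hp' i).2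
      _ = P * ∑ i, |A k i| := by rw [Finset.mul_sum]
      _ ≤ X := by rw [hX]; gcongr; exact hA k
  have hmaps : Set.MapsTo g s t := by
    intro p hp
    refine Fintype.mem_piFinset.2 fun k => ?_
    have := abs_le.1 (hbound p hp k)
    rw [Finset.mem_Icc]
    constructor <;> refine Int.floor_mono ?_ <;> gcongr
    · exact this.1
    · exact this.2
  have hlt : t.card < s.card := by
    have hs : (s.card : ℝ) = ((P : ℝ) + 1) ^ Fintype.card ι := by
      simp [s, Fintype.card_piFinset]
    rw [← Nat.cast_lt (α := ℝ), hs]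
    refine lt_of_le_of_lt ?_ hcard
    rw [show t.card = (⌊X / η⌋ + 1 - ⌊-X / η⌋).toNat ^ Fintype.card κ by
      simp [t, Fintype.card_piFinset], Nat.cast_pow]
    rcases isEmpty_or_nonempty κ with h | ⟨⟨k⟩⟩
    · simp
    have hX0 : 0 ≤ X := (abs_nonneg _).trans
      (hbound 0 (Fintype.mem_piFinset.2 fun _ => by simp) k)
    have hmono : ⌊-X / η⌋ ≤ ⌊X / η⌋ := Int.floor_mono (by gcongr; linarith)
    gcongr
    have h1 : (((⌊X / η⌋ + 1 - ⌊-X / η⌋).toNat : ℤ) : ℝ) = ⌊X / η⌋ + 1 - ⌊-X / η⌋ := by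
      rw [Int.toNat_of_nonneg (by omega)]; push_cast; ring
    rw [Int.cast_natCast] at h1
    rw [h1]
    have h2 := Int.floor_le (X / η)
    have h3 := Int.lt_floor_add_one (-X / η)
    have h4 : 2 * X / η = X / η - -X / η := by ring
    linarith
  obtain ⟨p, hp, q, hq, hne, heq⟩ := Finset.exists_ne_map_eq_of_card_lt_of_maps_to hlt hmaps
  refine ⟨p - q, sub_ne_zero.2 hne, fun i => ?_, fun k => ?_⟩
  · have h1 : 0 ≤ p i ∧ p i ≤ P := by simpa using (Fintype.mem_piFinset.1 hp) i
    have h2 : 0 ≤ q i ∧ q i ≤ P := by simpa using (Fintype.mem_piFinset.1 hq) i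
    change (p i - q i).natAbs ≤ P
    omega
  · have h := (Int.abs_sub_lt_one_of_floor_eq_floor (congrFun heq k)).le
    rw [← sub_div, abs_div, abs_of_pos hη, div_le_one hη] at h
    simpa only [Pi.sub_apply, Int.cast_sub, sub_mul, Finset.sum_sub_distrib] using h

/-- Box principle for complex linear forms. -/
lemma exists_int_norm_sum_mul_le {ι κ : Type*} [Fintype ι] [Fintype κ]
    (A : κ → ι → ℂ) (P : ℕ) {M η : ℝ} (hη : 0 < η) (hA : ∀ k, ∑ i, ‖A k i‖ ≤ M)
    (hcard : (2 * (P * M) / η + 2) ^ (2 * Fintype.card κ) < ((P : ℝ) + 1) ^ Fintype.card ι) :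
    ∃ p : ι → ℤ, p ≠ 0 ∧ (∀ i, (p i).natAbs ≤ P) ∧
      ∀ k, ‖∑ i, (p i : ℂ) * A k i‖ ≤ 2 * η := by
  obtain ⟨p, hp0, hpP, hp⟩ := exists_int_abs_sum_mul_le
    (Sum.elim (fun k i => (A k i).re) (fun k i => (A k i).im)) P hη (M := M)
    (by
      rintro (k | k)
      · exact (Finset.sum_le_sum fun i _ => Complex.abs_re_le_norm (A k i)).trans (hA k)
      · exact (Finset.sum_le_sum fun i _ => Complex.abs_im_le_norm (A k i)).trans (hA k))
    (by rwa [Fintype.card_sum, ← two_mul])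
  refine ⟨p, hp0, hpP, fun k => (Complex.norm_le_abs_re_add_abs_im _).trans ?_⟩
  have h1 := hp (Sum.inl k)
  have h2 := hp (Sum.inr k)
  simp only [Sum.elim_inl, Sum.elim_inr] at h1 h2
  simp only [Complex.re_sum, Complex.im_sum, Complex.mul_re, Complex.mul_im, Complex.intCast_re,
    Complex.intCast_im, zero_mul, sub_zero, add_zero]
  linarith

/-- An integral over a compact interval of a jointly continuous function that is holomorphic in
the parameter is holomorphic in the parameter. -/
lemma differentiable_intervalIntegral_of_differentiable {n : ℕ} {a b : ℝ}
    {G : (Fin n → ℂ) → ℝ → ℂ} (hG : Continuous (Function.uncurry G))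
    (hd : ∀ t, Differentiable ℂ fun x => G x t) :
    Differentiable ℂ fun x => ∫ t in a..b, G x t := by
  intro x₀
  have hK : IsCompact (closedBall x₀ 2 ×ˢ uIcc a b) :=
    (isCompact_closedBall x₀ 2).prod isCompact_uIcc
  obtain ⟨C, hC⟩ := hK.exists_bound_of_continuousOn hG.continuousOn
  have hcont : ∀ x, Continuous (G x) := fun x =>
    hG.comp (Continuous.prodMk_right x)
  refine (intervalIntegral.hasFDerivAt_integral_of_dominated_of_fderiv_le (𝕜 := ℂ)
    (F' := fun x t => fderiv ℂ (fun y => G y t) x) (bound := fun _ => 2 * C)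
    (ball_mem_nhds x₀ one_pos) (.of_forall fun x => (hcont x).aestronglyMeasurable)
    ((hcont x₀).intervalIntegrable _ _) ?_ ?_ (by simp)
    (.of_forall fun t _ x _ => (hd t x).hasFDerivAt)).differentiableAt
  · have hm := measurable_fderiv_with_param ℂ (f := fun t y => G y t)
      (hG.comp continuous_swap)
    exact (hm.comp (measurable_id.prodMk measurable_const)).aestronglyMeasurable
  · refine .of_forall fun t ht x hx => ?_
    have hb : ∀ y ∈ ball x 1, ‖G y t‖ ≤ C := fun y hy =>
      hC (y, t) ⟨by
        have := dist_triangle y x x₀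
        rw [mem_ball] at hx hy
        rw [mem_closedBall]
        linarith, uIoc_subset_uIcc ht⟩
    refine (Complex.norm_fderiv_le_div_of_mapsTo_ball (R₁ := 1) (R₂ := 2 * C)
      (hd t).differentiableOn (fun y hy => ?_) one_pos).trans_eq (div_one _)
    rw [mem_closedBall, dist_eq_norm]
    have := norm_sub_le (G y t) (G x t)
    linarith [hb y hy, hb x (mem_ball_self one_pos)]

/-- The multivariate geometric series. -/
lemma hasSum_prod_pow_of_lt_one {n : ℕ} {x : Fin n → ℝ} (h0 : ∀ i, 0 ≤ x i)
    (h1 : ∀ i, x i < 1) :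
    HasSum (fun k : Fin n → ℕ => ∏ i, x i ^ k i) (∏ i, (1 - x i)⁻¹) := by
  induction n with
  | zero => simp
  | succ n ih =>
    have hs := ih (x := fun i => x i.succ) (fun i => h0 _) (fun i => h1 _)
    have hg := hasSum_geometric_of_lt_one (h0 0) (h1 0)
    have hnn : ∀ k : Fin n → ℕ, 0 ≤ ∏ i, x i.succ ^ k i :=
      fun k => Finset.prod_nonneg fun i _ => pow_nonneg (h0 _) _
    have hmul : Summable fun q : ℕ × (Fin n → ℕ) => x 0 ^ q.1 * ∏ i, x i.succ ^ q.2 i :=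
      Summable.mul_of_nonneg (f := fun j : ℕ => x 0 ^ j)
        (g := fun k : Fin n → ℕ => ∏ i, x i.succ ^ k i) hg.summable hs.summable
        (Pi.le_def.2 fun j => pow_nonneg (h0 0) j) (Pi.le_def.2 hnn)
    have := hg.mul hs hmul
    rw [← (Fin.consEquiv fun _ : Fin (n + 1) => ℕ).hasSum_iff, Fin.prod_univ_succ]
    convert! this using 2 with k
    simp [Fin.consEquiv, Fin.prod_univ_succ]

/-- One-variable Taylor coefficients depend holomorphically on parameters. -/
lemma exists_differentiable_taylor_coeff {n : ℕ} {R M : ℝ} (hR : 0 < R)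
    {f : (Fin (n + 1) → ℂ) → ℂ} (hf : Differentiable ℂ f)
    (hM : ∀ z, (∀ i, ‖z i‖ ≤ R) → ‖f z‖ ≤ M) :
    ∃ a : ℕ → (Fin n → ℂ) → ℂ, (∀ j, Differentiable ℂ (a j)) ∧
      (∀ j z, (∀ i, ‖z i‖ ≤ R) → ‖a j z‖ ≤ M) ∧
      ∀ w z, ‖w‖ < R →
        HasSum (fun j => (w / R) ^ j * a j z) (f (Fin.cons w z : Fin (n + 1) → ℂ)) := by
  have hcons : Differentiable ℂ fun q : ℂ × (Fin n → ℂ) =>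
      (Fin.cons q.1 q.2 : Fin (n + 1) → ℂ) := by
    rw [differentiable_pi]
    intro i
    refine Fin.cases ?_ (fun i => ?_) i
    · simp only [Fin.cons_zero]
      fun_prop
    · simp only [Fin.cons_succ]
      fun_prop
  have hF : Differentiable ℂ fun q : ℂ × (Fin n → ℂ) =>
      f (Fin.cons q.1 q.2 : Fin (n + 1) → ℂ) := hf.comp hcons
  have hR' : (R : ℂ) ≠ 0 := by exact_mod_cast hR.ne'
  have hsphere : ∀ ζ ∈ sphere (0 : ℂ) R, ‖ζ‖ = R := fun ζ hζ => by simpa using hζ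
  refine ⟨fun j z => (2 * Real.pi * Complex.I : ℂ)⁻¹ • ∮ ζ in C(0, R),
    (R / ζ) ^ j • ζ⁻¹ • f (Fin.cons ζ z : Fin (n + 1) → ℂ), fun j => ?_, fun j z hz => ?_,
    fun w z hw => ?_⟩
  · refine Differentiable.const_smul (R := ℂ) ?_ _
    unfold circleIntegral
    have hne : ∀ θ, circleMap 0 R θ ≠ 0 := fun θ => circleMap_ne_center hR.ne'
    refine differentiable_intervalIntegral_of_differentiable ?_ fun t => ?_
    · have h1 : Continuous fun q : (Fin n → ℂ) × ℝ =>
          f (Fin.cons (circleMap 0 R q.2) q.1 : Fin (n + 1) → ℂ) :=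
        hF.continuous.comp (by fun_prop : Continuous fun q : (Fin n → ℂ) × ℝ =>
          (circleMap 0 R q.2, q.1))
      have h2 : Continuous fun q : (Fin n → ℂ) × ℝ => (circleMap 0 R q.2)⁻¹ :=
        ((continuous_circleMap 0 R).comp continuous_snd).inv₀ fun q => hne q.2
      have h3 : Continuous fun q : (Fin n → ℂ) × ℝ => circleMap 0 R q.2 * Complex.I :=
        ((continuous_circleMap 0 R).comp continuous_snd).mul continuous_const
      simp only [Function.uncurry_def, deriv_circleMap, div_eq_mul_inv]
      exact h3.smul (((continuous_const.mul h2).pow j).smul (h2.smul h1))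
    · have : Differentiable ℂ fun z : Fin n → ℂ =>
          f (Fin.cons (circleMap 0 R t) z : Fin (n + 1) → ℂ) :=
        hF.comp (by fun_prop : Differentiable ℂ fun z : Fin n → ℂ => (circleMap 0 R t, z))
      simp only [smul_eq_mul]
      fun_prop
  · have := circleIntegral.norm_two_pi_i_inv_smul_integral_le_of_norm_le_const
      (f := fun ζ => (R / ζ) ^ j • ζ⁻¹ • f (Fin.cons ζ z : Fin (n + 1) → ℂ)) (c := 0)
      (C := M / R) hR.le (fun ζ hζ => by
        have hζ' := hsphere ζ hζ
        have hb : ‖f (Fin.cons ζ z : Fin (n + 1) → ℂ)‖ ≤ M :=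
          hM _ (Fin.cases (by simpa using hζ'.le) (by simpa using hz))
        rw [norm_smul, norm_smul, norm_pow, norm_div, norm_inv, hζ', Complex.norm_real,
          Real.norm_of_nonneg hR.le, div_self hR.ne', one_pow, one_mul, inv_mul_eq_div]
        gcongr)
    rwa [mul_div_cancel₀ _ hR.ne'] at this
  · have hg : Differentiable ℂ fun ζ : ℂ => f (Fin.cons ζ z : Fin (n + 1) → ℂ) :=
      hF.comp (by fun_prop : Differentiable ℂ fun ζ : ℂ => (ζ, z))
    have hsum := hasSum_cauchyPowerSeries_integral (c := 0)
      (hg.continuous.continuousOn.circleIntegrable hR.le) hw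
    rw [zero_add, hg.diffContOnCl.two_pi_i_inv_smul_circleIntegral_sub_inv_smul
      (by simpa using hw)] at hsum
    convert! hsum using 2 with j
    rw [cauchyPowerSeries_apply, ← smul_eq_mul, smul_comm, ← circleIntegral.integral_smul]
    congr 1
    refine circleIntegral.integral_congr hR.le fun ζ hζ => ?_
    have hζ0 : ζ ≠ 0 := norm_pos_iff.1 ((hsphere ζ hζ).symm ▸ hR)
    simp only [sub_zero, smul_eq_mul, ← mul_assoc, ← mul_pow]
    congr 3
    field_simp

/-- Taylor expansion of an entire function of several variables on a polydisc, with Cauchy's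
estimates for the normalised coefficients. -/
lemma exists_hasSum_taylor_polydisc {n : ℕ} {R M : ℝ} (hR : 0 < R)
    {f : (Fin n → ℂ) → ℂ} (hf : Differentiable ℂ f)
    (hM : ∀ z, (∀ i, ‖z i‖ ≤ R) → ‖f z‖ ≤ M) :
    ∃ c : (Fin n → ℕ) → ℂ, (∀ k, ‖c k‖ ≤ M) ∧
      ∀ z, (∀ i, ‖z i‖ < R) → HasSum (fun k => (∏ i, (z i / (R : ℂ)) ^ k i) * c k) (f z) := by
  induction n with
  | zero =>
    refine ⟨fun _ => f 0, fun _ => hM 0 (fun i => i.elim0), fun z _ => ?_⟩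
    rw [Subsingleton.elim z 0]
    simp
  | succ n ih =>
    obtain ⟨a, had, haM, hasum⟩ := exists_differentiable_taylor_coeff hR hf hM
    choose c hcM hc using fun j => ih (had j) (haM j)
    refine ⟨fun k => c (k 0) (Fin.tail k), fun k => hcM _ _, fun z hz => ?_⟩
    have hsummable : Summable fun k : Fin (n + 1) → ℕ =>
        (∏ i, (z i / (R : ℂ)) ^ k i) * c (k 0) (Fin.tail k) := by
      refine .of_norm_bounded ((hasSum_prod_pow_of_lt_one (x := fun i => ‖z i‖ / R)
        (fun i => by positivity) (fun i => (div_lt_one hR).2 (hz i))).summable.mul_right M)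
        fun k => ?_
      rw [norm_mul, norm_prod]
      simp only [norm_pow, norm_div, Complex.norm_real, Real.norm_of_nonneg hR.le]
      gcongr
      exact hcM _ _
    have hs := (Fin.consEquiv fun _ : Fin (n + 1) => ℕ).hasSum_iff.2 hsummable.hasSum
    have hfib := hs.prod_fiberwise (g := fun j => (z 0 / R) ^ j * a j (Fin.tail z)) fun j => by
      have := (hc j (Fin.tail z) fun i => hz _).mul_left ((z 0 / R) ^ j)
      convert! this using 2 with k
      simp [Fin.consEquiv, Fin.prod_univ_succ, Fin.tail, mul_assoc]
    have hz' := hasum (z 0) (Fin.tail z) (hz 0)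
    rw [Fin.cons_self_tail] at hz'
    rw [← hfib.unique hz']
    exact hsummable.hasSum

/-- Bound for the sum of a power series whose coefficients are at most `δ` inside the cube of
side `T` and at most `X` everywhere, at a point whose coordinates have modulus at most `q`. -/
lemma norm_le_of_hasSum_of_cube_bound {n T : ℕ} {q δ X : ℝ} (hq0 : 0 ≤ q) (hq1 : q ≤ 1 / 2)
    (hδ : 0 ≤ δ) (hX : 0 ≤ X) {d u : (Fin n → ℕ) → ℂ} {s : ℂ}
    (hu : ∀ k, ‖u k‖ ≤ ∏ i, q ^ k i)
    (hcube : ∀ k, (∀ i, k i < T) → ‖d k‖ ≤ δ) (hall : ∀ k, ‖d k‖ ≤ X)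
    (hs : HasSum (fun k => u k * d k) s) :
    ‖s‖ ≤ 2 ^ n * δ + 2 ^ n * (n * q ^ T) * X := by
  classical
  have hgeom := hasSum_prod_pow_of_lt_one (n := n) (x := fun _ => q) (fun _ => hq0)
    (fun _ => by linarith)
  rw [Finset.prod_const, Finset.card_univ, Fintype.card_fin] at hgeom
  let K : Finset (Fin n → ℕ) := Fintype.piFinset fun _ => Finset.range T
  have hK : HasSum (fun k : Fin n → ℕ => if k ∈ K then ∏ i, q ^ k i else 0)
      (((1 - q ^ T) * (1 - q)⁻¹) ^ n) := by
    have h := hasSum_sum_of_ne_finset_zero (s := K) (L := .unconditional _)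
      (f := fun k : Fin n → ℕ => if k ∈ K then ∏ i, q ^ k i else 0) (fun k hk => if_neg hk)
    convert h using 1
    rw [Finset.sum_congr rfl fun k hk => if_pos hk, ← Finset.prod_univ_sum,
      Finset.prod_const, Finset.card_univ, Fintype.card_fin, geom_sum_eq (by linarith)]
    congr 1
    rw [← div_eq_mul_inv, ← neg_sub, ← neg_sub q 1, neg_div_neg_eq]
  have hbound := hs.norm_le_of_bounded ((hgeom.mul_right δ).add ((hgeom.sub hK).mul_right X))
    fun k => by
      have hp : 0 ≤ ∏ i, q ^ k i := Finset.prod_nonneg fun i _ => pow_nonneg hq0 _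
      rw [norm_mul]
      split_ifs with hk
      · rw [sub_self, zero_mul, add_zero]
        exact mul_le_mul (hu k) (hcube k fun i => by
          simpa using (Fintype.mem_piFinset.1 hk) i) (norm_nonneg _) hp
      · rw [sub_zero]
        have := mul_le_mul (hu k) (hall k) (norm_nonneg _) hp
        nlinarith [mul_nonneg hp hδ]
  have hinv : (1 - q)⁻¹ ≤ 2 := by
    rw [inv_le_comm₀ (by linarith) two_pos]
    linarith
  have hinv0 : 0 ≤ (1 - q)⁻¹ := inv_nonneg.2 (by linarith)
  have hpow : (1 - q)⁻¹ ^ n ≤ 2 ^ n := by gcongr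
  have hqT : q ^ T ≤ 1 := pow_le_one₀ hq0 (by linarith)
  have hbern : 1 - n * q ^ T ≤ (1 - q ^ T) ^ n := by
    have := one_add_mul_le_pow (a := -q ^ T) (by linarith) n
    rw [← sub_eq_add_neg] at this
    linarith
  refine hbound.trans ?_
  rw [mul_pow]
  have h1 : (1 - q)⁻¹ ^ n - (1 - q ^ T) ^ n * (1 - q)⁻¹ ^ n ≤ 2 ^ n * (n * q ^ T) := by
    calc _ = (1 - q)⁻¹ ^ n * (1 - (1 - q ^ T) ^ n) := by ring
      _ ≤ (1 - q)⁻¹ ^ n * (n * q ^ T) := by gcongr; linarith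
      _ ≤ 2 ^ n * (n * q ^ T) := by gcongr
  gcongr

lemma norm_le_polydiscSup {n : ℕ} {f : (Fin n → ℂ) → ℂ} (hf : Continuous f) {R : ℝ}
    {z : Fin n → ℂ} (hz : ∀ i, ‖z i‖ ≤ R) : ‖f z‖ ≤ PolydiscSup n f R := by
  have hc : IsCompact {z : Fin n → ℂ | ∀ i, ‖z i‖ ≤ R} := by
    convert isCompact_univ_pi fun _ : Fin n => isCompact_closedBall (0 : ℂ) R using 1
    ext z
    simp
  exact le_csSup (hc.bddAbove_image hf.norm.continuousOn) ⟨z, hz, rfl⟩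

lemma polydiscSup_le {n : ℕ} {f : (Fin n → ℂ) → ℂ} {r C : ℝ} (hr : 0 ≤ r)
    (h : ∀ z, (∀ i, ‖z i‖ ≤ r) → ‖f z‖ ≤ C) : PolydiscSup n f r ≤ C := by
  refine csSup_le ⟨_, 0, by simpa using fun _ => hr, rfl⟩ ?_
  rintro _ ⟨z, hz, rfl⟩
  exact h z hz

/-- The choice of the truncation order `T`: it is large enough for the remainder of the Taylor
expansion and small enough for the box principle. -/
lemma exists_truncation_order {n L : ℕ} (hL : 0 < L) (hn : 0 < n) {N W l : ℝ}
    (hW : 12 * (n : ℝ) ^ 2 ≤ W) (hl1 : 1 ≤ l) (hl2 : l ≤ W / 6)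
    (hLN : (2 * W) ^ (n + 1) ≤ (L : ℝ) * N * l ^ n) :
    ∃ T : ℕ, 2 ^ n * (n * Real.exp (-l) ^ T) ≤ Real.exp (-W) / 2 ∧
      (2 ^ (n + 4) * Real.exp W) ^ (2 * T ^ n) < ((⌊Real.exp N⌋₊ : ℝ) + 1) ^ L := by
  have hn1 : (1 : ℝ) ≤ n := by exact_mod_cast hn
  have hnn : (n : ℝ) ≤ (n : ℝ) ^ 2 := by nlinarith
  have hW0 : 12 ≤ W := by nlinarith
  have hl0 : 0 < l := by linarith
  have hlog2 := Real.log_two_lt_d9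
  have hexp2 : Real.exp (Real.log 2) = 2 := Real.exp_log two_pos
  refine ⟨⌈(W + 1.4 * n) / l⌉₊, ?_, ?_⟩
  · set T := ⌈(W + 1.4 * n) / l⌉₊
    have hT : W + 1.4 * n ≤ T * l := (div_le_iff₀ hl0).1 (Nat.le_ceil _)
    have h2n : 2 * (n : ℝ) ≤ 2 ^ n := by
      have : ∀ m : ℕ, 0 < m → 2 * m ≤ 2 ^ m := fun m hm => by
        induction m, hm using Nat.le_induction with
        | base => norm_num
        | succ m hm ih => rw [pow_succ]; omega
      exact_mod_cast this n hn
    have h4 : (2 : ℝ) ^ n * 2 ^ n ≤ Real.exp (1.4 * n) := by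
      rw [← mul_pow, ← hexp2, ← Real.exp_add, ← Real.exp_nat_mul]
      apply Real.exp_le_exp.2
      nlinarith
    have hq : Real.exp (-l) ^ T ≤ Real.exp (-W) * Real.exp (-(1.4 * n)) := by
      rw [← Real.exp_nat_mul, ← Real.exp_add]
      apply Real.exp_le_exp.2
      linarith
    calc 2 ^ n * (n * Real.exp (-l) ^ T)
        ≤ 2 ^ n * (2 ^ n / 2 * (Real.exp (-W) * Real.exp (-(1.4 * n)))) := by
          gcongr; linarith
      _ = (2 ^ n * 2 ^ n) * Real.exp (-(1.4 * n)) * (Real.exp (-W) / 2) := by ring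
      _ ≤ Real.exp (1.4 * n) * Real.exp (-(1.4 * n)) * (Real.exp (-W) / 2) := by gcongr
      _ = Real.exp (-W) / 2 := by rw [← Real.exp_add]; simp
  · set T := ⌈(W + 1.4 * n) / l⌉₊
    have hT : (T : ℝ) * l ≤ 1.29 * W := by
      have : (T : ℝ) ≤ (W + 1.4 * n) / l + 1 :=
        (Nat.ceil_lt_add_one (a := (W + 1.4 * n) / l) (by positivity)).le
      have h := mul_le_mul_of_nonneg_right this hl0.le
      rw [add_mul, div_mul_cancel₀ _ hl0.ne'] at h
      linarith
    have hB : 2 ^ (n + 4) * Real.exp W ≤ Real.exp (1.29 * W) := by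
      nth_rewrite 1 [← hexp2]
      rw [← Real.exp_nat_mul, ← Real.exp_add]
      apply Real.exp_le_exp.2
      push_cast
      nlinarith
    have hTn : 2 * (T : ℝ) ^ n * (1.29 * W) ≤ L * N := by
      refine le_of_mul_le_mul_right (le_trans ?_ hLN) (pow_pos hl0 n)
      calc 2 * (T : ℝ) ^ n * (1.29 * W) * l ^ n = 2 * W * (1.29 * (T * l) ^ n) := by ring
        _ ≤ 2 * W * (1.29 ^ n * (1.29 * W) ^ n) := by
            gcongr
            exact le_self_pow₀ (by norm_num) hn.ne'
        _ = 2 * W * (1.29 * (1.29 * W)) ^ n := by rw [mul_pow 1.29 (1.29 * W)]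
        _ ≤ 2 * W * (2 * W) ^ n := by
            gcongr 2 * W * ?_ ^ n
            linarith
        _ = (2 * W) ^ (n + 1) := by ring
    calc (2 ^ (n + 4) * Real.exp W) ^ (2 * T ^ n) ≤ Real.exp (1.29 * W) ^ (2 * T ^ n) := by
          gcongr
      _ = Real.exp (2 * (T : ℝ) ^ n * (1.29 * W)) := by
          rw [← Real.exp_nat_mul]; push_cast; rfl
      _ ≤ Real.exp (L * N) := Real.exp_le_exp.2 hTn
      _ = Real.exp N ^ L := Real.exp_nat_mul _ _
      _ < ((⌊Real.exp N⌋₊ : ℝ) + 1) ^ L :=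
          pow_lt_pow_left₀ (Nat.lt_floor_add_one _) (Real.exp_pos _).le hL.ne'

end AuxiliaryLemmas

/-- **Existence of universal auxiliary functions.** With `W = N + U + V`, assuming
`W ≥ 12n²`, `e ≤ R/r ≤ e^{W/6}`, `∑ |φ_λ|_R ≤ e^U` and
`(2W)^{n+1} ≤ L N (log(R/r))^n`, there exist rational integers `p₁, …, p_L` with
`0 < max |p_λ| ≤ e^N` such that `F = p₁φ₁ + ⋯ + p_Lφ_L` satisfies `|F|_r ≤ e^{-V}`. -/
theorem universal_auxiliary_function
    (L n : ℕ) (hL : 0 < L) (hn : 0 < n)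
    (N U V R r : ℝ) (hN : 0 < N) (hU : 0 < U) (hV : 0 < V) (hR : 0 < R) (hr : 0 < r)
    (φ : Fin L → (Fin n → ℂ) → ℂ) (hφ : ∀ lam, Differentiable ℂ (φ lam))
    (hW : 12 * (n : ℝ) ^ 2 ≤ N + U + V)
    (hRr1 : Real.exp 1 ≤ R / r)
    (hRr2 : R / r ≤ Real.exp ((N + U + V) / 6))
    (hsum : ∑ lam, PolydiscSup n (φ lam) R ≤ Real.exp U)
    (hLN : (2 * (N + U + V)) ^ (n + 1) ≤ (L : ℝ) * N * (Real.log (R / r)) ^ n) :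
    ∃ p : Fin L → ℤ,
      0 < (((Finset.univ.sup fun lam => (p lam).natAbs) : ℕ) : ℝ) ∧
      (((Finset.univ.sup fun lam => (p lam).natAbs) : ℕ) : ℝ) ≤ Real.exp N ∧
      PolydiscSup n (fun z => ∑ lam, (p lam : ℂ) * φ lam z) r ≤ Real.exp (-V) := by
  obtain ⟨W, hWdef⟩ : ∃ W, W = N + U + V := ⟨_, rfl⟩
  rw [← hWdef] at hW hRr2 hLN
  have hρ : 0 < R / r := div_pos hR hr
  set l := Real.log (R / r) with hl
  have hl1 : 1 ≤ l := (Real.le_log_iff_exp_le hρ).2 hRr1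
  have hl2 : l ≤ W / 6 := (Real.log_le_iff_le_exp hρ).2 hRr2
  obtain ⟨T, hT1, hT2⟩ := exists_truncation_order hL hn hW hl1 hl2 hLN
  have hq : Real.exp (-l) = r / R := by rw [Real.exp_neg, hl, Real.exp_log hρ, inv_div]
  have hexp1 : 2 ≤ Real.exp 1 := by linarith [Real.exp_one_gt_d9]
  have hq2 : r / R ≤ 1 / 2 := by
    rw [← inv_div R r, one_div]
    exact inv_anti₀ two_pos (hexp1.trans hRr1)
  have hrR : r < R := by
    rw [div_le_iff₀ hR] at hq2
    linarith
  choose c hcM hc using fun lam => exists_hasSum_taylor_polydisc hR (hφ lam)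
    fun z hz => norm_le_polydiscSup (hφ lam).continuous hz
  set P := ⌊Real.exp N⌋₊
  have hPle : (P : ℝ) ≤ Real.exp N := Nat.floor_le (Real.exp_pos N).le
  have hexpW : Real.exp W = Real.exp N * Real.exp U * Real.exp V := by
    rw [hWdef, Real.exp_add, Real.exp_add]
  set η : ℝ := Real.exp (-V) / 2 ^ (n + 2) with hη
  have hη0 : 0 < η := by positivity
  have hcU : ∀ k, ∑ lam, ‖c lam k‖ ≤ Real.exp U := fun k =>
    (Finset.sum_le_sum fun lam _ => hcM lam k).trans hsum
  have hboxes : 2 * (P * Real.exp U) / η + 2 ≤ 2 ^ (n + 4) * Real.exp W := by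
    have h1 : 2 * (P * Real.exp U) / η ≤ 2 ^ (n + 3) * Real.exp W := by
      calc 2 * (P * Real.exp U) / η ≤ 2 * (Real.exp N * Real.exp U) / η := by gcongr
        _ = 2 ^ (n + 3) * Real.exp W := by
          rw [hη, hexpW, Real.exp_neg]; field_simp; ring
    have h2 : (1 : ℝ) ≤ Real.exp W := Real.one_le_exp (by linarith)
    have h3 : (2 : ℝ) ≤ 2 ^ (n + 3) := le_self_pow₀ one_le_two (by omega)
    have h4 : (2 : ℝ) ^ (n + 4) = 2 ^ (n + 3) + 2 ^ (n + 3) := by ring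
    nlinarith
  obtain ⟨p, hp0, hpP, hp⟩ := exists_int_norm_sum_mul_le
    (fun (k : Fin n → Fin T) lam => c lam fun i => (k i : ℕ)) P hη0 (fun k => hcU _) (by
      rw [Fintype.card_fun, Fintype.card_fin, Fintype.card_fin, Fintype.card_fin]
      exact (pow_le_pow_left₀ (by positivity) hboxes _).trans_lt hT2)
  have hsup : ∀ lam, (p lam).natAbs ≤ Finset.univ.sup fun lam => (p lam).natAbs := fun lam =>
    Finset.le_sup (f := fun lam => (p lam).natAbs) (Finset.mem_univ lam)
  refine ⟨p, ?_, ?_, polydiscSup_le hr.le fun z hz => ?_⟩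
  · obtain ⟨lam, hlam⟩ := Function.ne_iff.1 hp0
    exact_mod_cast (Int.natAbs_pos.2 hlam).trans_le (hsup lam)
  · refine le_trans ?_ hPle
    exact_mod_cast Finset.sup_le fun lam _ => hpP lam
  have hF : HasSum (fun k => (∏ i, (z i / (R : ℂ)) ^ k i) * ∑ lam, (p lam : ℂ) * c lam k)
      (∑ lam, (p lam : ℂ) * φ lam z) := by
    have := hasSum_sum (s := Finset.univ) fun lam _ =>
      (hc lam z fun i => (hz i).trans_lt hrR).mul_left (p lam : ℂ)
    convert! this using 2 with k
    rw [Finset.mul_sum]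
    exact Finset.sum_congr rfl fun lam _ => by ring
  refine (norm_le_of_hasSum_of_cube_bound (T := T) (q := r / R) (δ := 2 * η)
    (X := Real.exp N * Real.exp U) (by positivity) hq2 (by positivity) (by positivity)
    (fun k => ?_) (fun k hk => hp fun i => ⟨k i, hk i⟩) (fun k => ?_) hF).trans ?_
  · rw [norm_prod]
    refine Finset.prod_le_prod (fun _ _ => norm_nonneg _) fun i _ => ?_
    rw [norm_pow, norm_div, Complex.norm_real, Real.norm_of_nonneg hR.le]
    gcongr
    exact hz i
  · calc ‖∑ lam, (p lam : ℂ) * c lam k‖ ≤ ∑ lam, ‖(p lam : ℂ) * c lam k‖ := norm_sum_le _ _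
      _ ≤ ∑ lam, Real.exp N * ‖c lam k‖ := by
          refine Finset.sum_le_sum fun lam _ => ?_
          rw [norm_mul, Complex.norm_intCast, ← Int.cast_abs, ← Nat.cast_natAbs]
          gcongr
          exact le_trans (by exact_mod_cast hpP lam) hPle
      _ ≤ Real.exp N * Real.exp U := by
          rw [← Finset.mul_sum]
          gcongr
          exact hcU k
  · rw [hq] at hT1
    have h1 : 2 ^ n * (2 * η) = Real.exp (-V) / 2 := by
      rw [hη]; field_simp; ring
    have h2 : Real.exp (-W) / 2 * (Real.exp N * Real.exp U) = Real.exp (-V) / 2 := by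
      rw [hWdef, show -(N + U + V) = -N + -U + -V by ring, Real.exp_add, Real.exp_add,
        Real.exp_neg N, Real.exp_neg U]
      field_simp
    have h3 := mul_le_mul_of_nonneg_right hT1
      (by positivity : 0 ≤ Real.exp N * Real.exp U)
    linarith
end

section
/- Let d ≥ 2 be a rational integer and let α be an algebraic complex number with 0 < |α| < 1. Then the number Σ_{k=0}^{∞} α^{d^k} is transcendental. -/
namespace Mahler

open Polynomial Height Filter Topology

/-- A rational function `p / q` over a field never satisfies
`(p / q)(z ^ d) - (p / q)(z) = m z` with `m ≠ 0` and `d ≥ 2`. -/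
theorem mul_expand_ne {F : Type*} [Field F] {d : ℕ} (hd : 2 ≤ d) {m : F} (hm : m ≠ 0)
    {p q : F[X]} (hq : q ≠ 0) :
    p * expand F d q ≠ q * expand F d p - C m * X * q * expand F d q := by
  classical
  intro h
  obtain ⟨g, p', q', hp', hq', hcop⟩ :
      ∃ g p' q' : F[X], p = g * p' ∧ q = g * q' ∧ IsCoprime p' q' := by
    obtain ⟨p', q', hp', hq', hu⟩ := extract_gcd p q
    exact ⟨_, p', q', hp', hq', (gcd_isUnit_iff p' q').1 hu⟩
  have hg : g ≠ 0 := by rintro h0; rw [h0, zero_mul] at hq'; exact hq hq'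
  have hq'0 : q' ≠ 0 := by rintro rfl; rw [mul_zero] at hq'; exact hq hq'
  have hgd : expand F d g ≠ 0 := by
    rwa [Ne, expand_eq_zero (by omega)]
  have h' : p' * expand F d q' = q' * expand F d p' - C m * X * q' * expand F d q' := by
    rw [hp', hq', map_mul, map_mul] at h
    refine mul_left_cancel₀ (mul_ne_zero hg hgd) ?_
    linear_combination h
  have hcop' : IsCoprime (expand F d p') (expand F d q') := hcop.map (expand F d).toRingHom
  have hdvd : expand F d q' ∣ q' :=
    hcop'.symm.dvd_of_dvd_mul_right ⟨p' + C m * X * q', by linear_combination -h'⟩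
  have hdeg : q'.natDegree = 0 := by
    have := natDegree_le_of_dvd hdvd hq'0
    rw [natDegree_expand] at this
    nlinarith
  obtain ⟨c, rfl⟩ : ∃ c, q' = C c := ⟨_, eq_C_of_natDegree_eq_zero hdeg⟩
  have hc : c ≠ 0 := by rintro rfl; simp at hq'0
  have hp : expand F d p' = p' + C (m * c) * X := by
    refine mul_left_cancel₀ hq'0 ?_
    rw [expand_C] at h'
    rw [C_mul]
    linear_combination -h'
  have hle : p'.natDegree * d ≤ max p'.natDegree 1 := by
    rw [← natDegree_expand, hp]
    refine (natDegree_add_le _ _).trans (max_le_max le_rfl ?_)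
    exact (natDegree_C_mul_le _ _).trans natDegree_X_le
  have hp0 : p'.natDegree = 0 := by
    by_contra hne
    have : max p'.natDegree 1 = p'.natDegree := max_eq_left (by omega)
    rw [this] at hle
    have : 0 < p'.natDegree := by omega
    nlinarith
  rw [eq_C_of_natDegree_eq_zero hp0, expand_C] at hp
  have := congrArg (fun r => r.coeff 1) hp
  simp [hm, hc] at this

/-- The second highest coefficient of a Taylor shift. -/
theorem coeff_taylor_of_natDegree_eq_succ {R : Type*} [CommRing R] (r : R) {f : R[X]} {n : ℕ}
    (hf : f.natDegree = n + 1) :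
    (taylor r f).coeff n = f.coeff n + (n + 1) * f.coeff (n + 1) * r := by
  rw [taylor_coeff, eval_eq_sum_range' (n := 2)]
  · simp [Finset.sum_range_succ, hasseDeriv_coeff, add_comm 1 n]
  · have := natDegree_hasseDeriv_le f n
    omega

/-- A power series solving Mahler's functional equation `f(z ^ d) = f(z) - z` is transcendental
over the polynomials. -/
theorem transcendental_of_expand_eq {F : Type*} [Field F] [CharZero F] {d : ℕ} (hd : 2 ≤ d)
    (hd0 : d ≠ 0) {f : PowerSeries F} (hf : PowerSeries.expand d hd0 f = f - PowerSeries.X) :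
    Transcendental F[X] f := by
  classical
  intro halg
  have hex : ∃ n, ∃ P : F[X][X], P ≠ 0 ∧ aeval f P = 0 ∧ P.natDegree = n := by
    obtain ⟨P, hP, h⟩ := halg
    exact ⟨_, P, hP, h, rfl⟩
  obtain ⟨P, hP0, hPf, hPn⟩ := Nat.find_spec hex
  have hmin : ∀ Q : F[X][X], aeval f Q = 0 → Q.natDegree < P.natDegree → Q = 0 := by
    intro Q hQ hlt
    by_contra hne
    exact Nat.find_min hex (hPn ▸ hlt) ⟨Q, hne, hQ, rfl⟩
  have hinj : Function.Injective (expand F d) := expand_injective (by omega)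
  have hpos : P.natDegree ≠ 0 := by
    intro h0
    rw [eq_C_of_natDegree_eq_zero h0] at hPf hP0
    rw [aeval_C] at hPf
    apply hP0
    have : P.coeff 0 = 0 := by
      apply Polynomial.coe_injective F
      simpa [PowerSeries.algebraMap_apply'] using hPf
    rw [this, C_0]
  obtain ⟨n, hn⟩ : ∃ n, P.natDegree = n + 1 := Nat.exists_eq_succ_of_ne_zero hpos
  have hcomp : (PowerSeries.expand (R := F) d hd0).toRingHom.comp
      (algebraMap F[X] (PowerSeries F)) =
      (algebraMap F[X] (PowerSeries F)).comp (expand F d).toRingHom := by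
    refine Polynomial.ringHom_ext (fun a => ?_) ?_ <;>
      simp [PowerSeries.algebraMap_apply', PowerSeries.expand_C, PowerSeries.expand_X]
  set R : F[X][X] := P.map (expand F d).toRingHom with hR
  have hRdeg : R.natDegree = n + 1 := by
    rw [hR, natDegree_map_eq_of_injective hinj, hn]
  have hRcoeff : ∀ i, R.coeff i = expand F d (P.coeff i) := fun i => by
    simp only [hR, coeff_map]
    rfl
  set Q : F[X][X] := taylor (-X) R with hQ
  have hQf : aeval f Q = 0 := by
    have h1 : aeval f Q = aeval (f - PowerSeries.X) R := by
      rw [hQ, taylor_apply, aeval_comp]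
      simp [PowerSeries.algebraMap_apply', sub_eq_add_neg]
    rw [h1, ← hf, hR, aeval_def, eval₂_map, ← hcomp]
    have := hom_eval₂ P (algebraMap F[X] (PowerSeries F))
      (PowerSeries.expand (R := F) d hd0).toRingHom f
    rw [← aeval_def, hPf, map_zero] at this
    exact this.symm
  have hQdeg : Q.natDegree = n + 1 := by rw [hQ, natDegree_taylor, hRdeg]
  have hQlead : Q.coeff (n + 1) = expand F d (P.coeff (n + 1)) := by
    rw [← hRcoeff, ← hRdeg, hQ, coeff_taylor_natDegree, leadingCoeff]
  have hD : C (expand F d (P.coeff (n + 1))) * P - C (P.coeff (n + 1)) * Q = 0 := by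
    set D := C (expand F d (P.coeff (n + 1))) * P - C (P.coeff (n + 1)) * Q with hDdef
    refine hmin D (by simp [hDdef, hPf, hQf]) ?_
    have hle : D.natDegree ≤ n + 1 := by
      refine (natDegree_sub_le _ _).trans (max_le ?_ ?_)
      · exact (natDegree_C_mul_le _ _).trans hn.le
      · exact (natDegree_C_mul_le _ _).trans hQdeg.le
    rw [hn]
    refine lt_of_le_of_ne hle fun heq => ?_
    have hc : D.coeff (n + 1) = 0 := by
      simp only [hDdef, coeff_sub, coeff_C_mul, hQlead]
      ring
    rw [← heq, coeff_natDegree, leadingCoeff_eq_zero] at hc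
    simp [hc] at heq
  have hcoeff := congrArg (fun S => S.coeff n) hD
  simp only [coeff_sub, coeff_C_mul, coeff_zero] at hcoeff
  rw [hQ, coeff_taylor_of_natDegree_eq_succ _ hRdeg, hRcoeff, hRcoeff] at hcoeff
  have hlead : P.coeff (n + 1) ≠ 0 := by
    have : P.leadingCoeff ≠ 0 := leadingCoeff_ne_zero.2 hP0
    rwa [leadingCoeff, hn] at this
  refine mul_expand_ne hd (m := ((n + 1 : ℕ) : F)) (Nat.cast_ne_zero.2 n.succ_ne_zero)
    (p := P.coeff n) hlead ?_
  rw [C_eq_natCast]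
  push_cast
  linear_combination hcoeff

open Classical in
/-- The power series `∑ X ^ (d ^ k)`. -/
noncomputable def series (d : ℕ) : PowerSeries ℚ :=
  PowerSeries.mk fun n => if ∃ k, n = d ^ k then 1 else 0

theorem expand_series {d : ℕ} (hd : 2 ≤ d) (hd0 : d ≠ 0) :
    PowerSeries.expand d hd0 (series d) = series d - PowerSeries.X := by
  classical
  ext n
  rw [map_sub, PowerSeries.coeff_X]
  by_cases hdvd : d ∣ n
  · obtain ⟨m, rfl⟩ := hdvd
    have h1 : d * m ≠ 1 := fun h => by have := Nat.eq_one_of_dvd_one ⟨m, h.symm⟩; omega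
    rw [PowerSeries.coeff_expand_mul, if_neg h1, sub_zero]
    simp only [series, PowerSeries.coeff_mk]
    refine if_congr ⟨?_, ?_⟩ rfl rfl
    · rintro ⟨k, rfl⟩
      exact ⟨k + 1, by rw [pow_succ']⟩
    · rintro ⟨k, hk⟩
      cases k with
      | zero => exact absurd hk h1
      | succ k =>
        exact ⟨k, Nat.eq_of_mul_eq_mul_left (Nat.pos_of_ne_zero hd0) (by rw [hk, pow_succ'])⟩
  · rw [PowerSeries.coeff_expand_of_not_dvd _ _ _ hdvd]
    simp only [series, PowerSeries.coeff_mk]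
    by_cases h1 : n = 1
    · subst h1
      rw [if_pos ⟨0, by simp⟩]
      simp
    · rw [if_neg h1, if_neg, sub_zero]
      rintro ⟨k, rfl⟩
      cases k with
      | zero => simp at h1
      | succ k => exact hdvd (Dvd.intro_left (d ^ k) rfl)

theorem X_pow_dvd_series_sub {d : ℕ} (hd : 2 ≤ d) (s : ℕ) :
    (PowerSeries.X : PowerSeries ℚ) ^ d ^ s ∣
      series d - ∑ k ∈ Finset.range s, PowerSeries.X ^ d ^ k := by
  classical
  have hd0 : d ≠ 0 := by omega
  induction s with
  | zero =>
    rw [pow_zero, pow_one, PowerSeries.X_dvd_iff]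
    have : ¬ ∃ k, 0 = d ^ k := fun ⟨k, hk⟩ => (pow_ne_zero k hd0) hk.symm
    simp [series, this]
  | succ s ih =>
    have := map_dvd (PowerSeries.expand d hd0) ih
    rw [map_pow, PowerSeries.expand_X, ← pow_mul, ← pow_succ', map_sub, map_sum,
      expand_series hd] at this
    convert this using 1
    rw [Finset.sum_range_succ', pow_zero, pow_one, sub_sub, add_comm]
    congr 2
    refine Finset.sum_congr rfl fun k _ => ?_
    rw [map_pow, PowerSeries.expand_X, ← pow_mul, ← pow_succ']

/-- The value at `(x, y)` of the polynomial `∑ i j, c i j * x ^ i * y ^ j`. -/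
def bivar {A : Type*} [CommRing A] [Algebra ℚ A] {N : ℕ} (c : Fin (N + 1) → Fin (N + 1) → ℚ)
    (x y : A) : A :=
  ∑ i, ∑ j, c i j • (x ^ (i : ℕ) * y ^ (j : ℕ))

theorem map_bivar {A B : Type*} [CommRing A] [Algebra ℚ A] [CommRing B] [Algebra ℚ B] {N : ℕ}
    (φ : A →ₐ[ℚ] B) (c : Fin (N + 1) → Fin (N + 1) → ℚ) (x y : A) :
    φ (bivar c x y) = bivar c (φ x) (φ y) := by
  simp [bivar, map_sum]

theorem sub_dvd_bivar_sub_bivar {A : Type*} [CommRing A] [Algebra ℚ A] {N : ℕ}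
    (c : Fin (N + 1) → Fin (N + 1) → ℚ) (x y z : A) :
    y - z ∣ bivar c x y - bivar c x z := by
  simp only [bivar, ← Finset.sum_sub_distrib, ← smul_sub, ← mul_sub]
  refine Finset.dvd_sum fun i _ => Finset.dvd_sum fun j _ => ?_
  exact dvd_smul_of_dvd _ ((sub_dvd_pow_sub_pow y z j).mul_left _)

theorem bivar_ne_zero {N : ℕ} {c : Fin (N + 1) → Fin (N + 1) → ℚ} (hc : c ≠ 0)
    {f : PowerSeries ℚ} (hf : Transcendental ℚ[X] f) :
    bivar c PowerSeries.X f ≠ 0 := by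
  intro h
  set P : ℚ[X][X] := ∑ i : Fin (N + 1), ∑ j : Fin (N + 1),
    monomial (j : ℕ) (monomial (i : ℕ) (c i j)) with hP
  have hPf : aeval f P = 0 := by
    rw [← h, hP, bivar]
    simp only [map_sum, aeval_monomial]
    refine Finset.sum_congr rfl fun i _ => Finset.sum_congr rfl fun j _ => ?_
    rw [PowerSeries.algebraMap_apply', ← C_mul_X_pow_eq_monomial]
    simp [PowerSeries.smul_eq_C_mul, mul_assoc]
  have hP0 : P = 0 := by
    by_contra hne
    exact hf ⟨P, hne, hPf⟩
  apply hc
  funext i j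
  have := congrArg (fun S => (S.coeff j).coeff i) hP0
  simpa [hP, finsetSum_coeff, coeff_monomial, apply_ite, ite_apply, Fin.val_inj] using this

/-- The auxiliary polynomial: `N ^ 2` linear conditions on `(N + 1) ^ 2` coefficients. -/
theorem exists_bivar_X_pow_dvd (f : PowerSeries ℚ) (N : ℕ) :
    ∃ c : Fin (N + 1) → Fin (N + 1) → ℚ, c ≠ 0 ∧
      PowerSeries.X ^ N ^ 2 ∣ bivar c PowerSeries.X f := by
  let L : (Fin (N + 1) → Fin (N + 1) → ℚ) →ₗ[ℚ] (Fin (N ^ 2) → ℚ) :=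
    { toFun := fun c n => PowerSeries.coeff n (bivar c PowerSeries.X f)
      map_add' := fun c c' => by
        funext n
        simp [bivar, add_smul, Finset.sum_add_distrib]
      map_smul' := fun r c => by
        funext n
        simp [bivar, mul_smul, Finset.mul_sum] }
  have hker : L.ker ≠ ⊥ := by
    refine LinearMap.ker_ne_bot_of_finrank_lt ?_
    rw [Module.finrank_fin_fun, Module.finrank_pi_fintype]
    simp
    nlinarith
  obtain ⟨c, hc, hc0⟩ := Submodule.exists_mem_ne_zero_of_ne_bot hker
  refine ⟨c, hc0, PowerSeries.X_pow_dvd_iff.2 fun n hn => ?_⟩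
  exact congrFun (LinearMap.mem_ker.1 hc) ⟨n, hn⟩

theorem norm_pow_sub_pow_le {u v : ℂ} (hu : ‖u‖ ≤ 1) (hv : ‖v‖ ≤ 1) (j : ℕ) :
    ‖u ^ j - v ^ j‖ ≤ j * ‖u - v‖ := by
  induction j with
  | zero => simp
  | succ j ih =>
    have : u ^ (j + 1) - v ^ (j + 1) = u * (u ^ j - v ^ j) + (u - v) * v ^ j := by ring
    rw [this]
    refine (norm_add_le _ _).trans ?_
    rw [norm_mul, norm_mul, norm_pow]
    have h1 : ‖u‖ * ‖u ^ j - v ^ j‖ ≤ 1 * (j * ‖u - v‖) := by gcongr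
    have h2 : ‖u - v‖ * ‖v‖ ^ j ≤ ‖u - v‖ * 1 := by
      gcongr
      exact pow_le_one₀ (norm_nonneg _) hv
    push_cast
    linarith

theorem exists_norm_bivar_sub_le {N : ℕ} (c : Fin (N + 1) → Fin (N + 1) → ℚ) :
    ∃ L : ℝ, 0 ≤ L ∧ ∀ z u v : ℂ, ‖z‖ ≤ 1 → ‖u‖ ≤ 1 → ‖v‖ ≤ 1 →
      ‖bivar c z u - bivar c z v‖ ≤ L * ‖u - v‖ := by
  refine ⟨∑ i, ∑ j, ‖c i j‖ * (j : ℕ), by positivity, fun z u v hz hu hv => ?_⟩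
  simp only [bivar, ← Finset.sum_sub_distrib, ← smul_sub, ← mul_sub, Finset.sum_mul]
  refine (norm_sum_le _ _).trans (Finset.sum_le_sum fun i _ => ?_)
  refine (norm_sum_le _ _).trans (Finset.sum_le_sum fun j _ => ?_)
  rw [norm_smul, norm_mul, norm_pow, mul_assoc]
  refine mul_le_mul_of_nonneg_left ?_ (norm_nonneg _)
  calc ‖z‖ ^ (i : ℕ) * ‖u ^ (j : ℕ) - v ^ (j : ℕ)‖
      ≤ 1 * ((j : ℕ) * ‖u - v‖) := by
        gcongr
        · exact pow_le_one₀ (norm_nonneg _) hz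
        · exact norm_pow_sub_pow_le hu hv _
    _ = _ := one_mul _

theorem summable_norm_pow_pow {d : ℕ} (hd : 2 ≤ d) {z : ℂ} (hz : ‖z‖ < 1) :
    Summable fun k : ℕ => ‖z ^ d ^ k‖ := by
  refine Summable.of_nonneg_of_le (fun _ => norm_nonneg _) (fun k => ?_)
    (summable_geometric_of_lt_one (norm_nonneg z) hz)
  rw [norm_pow]
  exact pow_le_pow_of_le_one (norm_nonneg _) hz.le (Nat.lt_pow_self hd).le

theorem sum_add_tsum_pow_pow {d : ℕ} (hd : 2 ≤ d) {z : ℂ} (hz : ‖z‖ < 1) (s : ℕ) :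
    ∑ k ∈ Finset.range s, z ^ d ^ k + ∑' k : ℕ, (z ^ d ^ s) ^ d ^ k = ∑' k : ℕ, z ^ d ^ k := by
  rw [← (summable_norm_pow_pow hd hz).of_norm.sum_add_tsum_nat_add s]
  congr 1
  refine tsum_congr fun k => ?_
  rw [← pow_mul, ← pow_add, add_comm]

theorem norm_tsum_pow_pow_le {d : ℕ} (hd : 2 ≤ d) {z : ℂ} (hz : ‖z‖ ≤ 1 / 2) :
    ‖∑' k : ℕ, z ^ d ^ k‖ ≤ 2 * ‖z‖ := by
  have hz1 : ‖z‖ < 1 := by linarith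
  have hgeo := (hasSum_geometric_of_lt_one (norm_nonneg z) hz1).mul_right ‖z‖
  refine (tsum_of_norm_bounded hgeo fun k => ?_).trans ?_
  · rw [norm_pow, ← pow_succ]
    exact pow_le_pow_of_le_one (norm_nonneg _) hz1.le (Nat.lt_pow_self hd)
  · gcongr
    rw [inv_le_comm₀ (by linarith) (by norm_num)]
    linarith

/-- Near the origin, `∑ c i j z ^ i f(z) ^ j` behaves as the first nonzero term of its power
series expansion. -/
theorem eventually_bivar_ne_zero_and_norm_le {d : ℕ} (hd : 2 ≤ d) {N M : ℕ}
    {c : Fin (N + 1) → Fin (N + 1) → ℚ} (hc : bivar c PowerSeries.X (series d) ≠ 0)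
    (hM : PowerSeries.X ^ M ∣ bivar c PowerSeries.X (series d)) :
    ∃ B : ℝ, 0 < B ∧ ∀ᶠ z : ℂ in 𝓝[≠] 0, bivar c z (∑' k : ℕ, z ^ d ^ k) ≠ 0 ∧
      ‖bivar c z (∑' k : ℕ, z ^ d ^ k)‖ ≤ B * ‖z‖ ^ M := by
  set F := bivar c PowerSeries.X (series d)
  obtain ⟨m, hm0, hmlt⟩ : ∃ m, PowerSeries.coeff m F ≠ 0 ∧
      ∀ n < m, PowerSeries.coeff n F = 0 := by
    classical
    have hex := PowerSeries.exists_coeff_ne_zero_iff_ne_zero.2 hc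
    exact ⟨Nat.find hex, Nat.find_spec hex, fun n hn => not_not.1 (Nat.find_min hex hn)⟩
  have hMm : M ≤ m := by
    by_contra hlt
    exact hm0 (PowerSeries.X_pow_dvd_iff.1 hM m (by omega))
  have hmd : m + 1 ≤ d ^ m := Nat.lt_pow_self hd
  set T : ℚ[X] := ∑ k ∈ Finset.range m, X ^ d ^ k with hT
  set Q : ℚ[X] := bivar c X T with hQ
  have hQcoe : (Q : PowerSeries ℚ) =
      bivar c PowerSeries.X (∑ k ∈ Finset.range m, PowerSeries.X ^ d ^ k) := by
    have := map_bivar (Polynomial.coeToPowerSeries.algHom (R := ℚ) ℚ) c X T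
    simpa [hT, map_sum] using this
  have hdvd : PowerSeries.X ^ (m + 1) ∣ F - (Q : PowerSeries ℚ) := by
    rw [hQcoe]
    exact (pow_dvd_pow _ hmd).trans
      ((X_pow_dvd_series_sub hd m).trans (sub_dvd_bivar_sub_bivar c _ _ _))
  have hcoeff : ∀ n < m + 1, Q.coeff n = PowerSeries.coeff n F := fun n hn => by
    have := PowerSeries.X_pow_dvd_iff.1 hdvd n hn
    rw [map_sub, Polynomial.coeff_coe, sub_eq_zero] at this
    exact this.symm
  obtain ⟨R, hR⟩ : X ^ m ∣ Q :=
    Polynomial.X_pow_dvd_iff.2 fun n hn => by rw [hcoeff n (by omega), hmlt n hn]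
  have hR0 : R.coeff 0 ≠ 0 := by
    have := hcoeff m (by omega)
    rw [hR, coeff_X_pow_mul', if_pos le_rfl, Nat.sub_self] at this
    rwa [this]
  have hRval : aeval (0 : ℂ) R ≠ 0 := by
    rw [← Polynomial.coeff_zero_eq_aeval_zero']
    simpa using hR0
  set r := ‖aeval (0 : ℂ) R‖ with hr
  have hrpos : 0 < r := norm_pos_iff.2 hRval
  obtain ⟨L, hL0, hL⟩ := exists_norm_bivar_sub_le c
  have hRcont : Tendsto (fun z : ℂ => ‖aeval z R‖) (𝓝[≠] 0) (𝓝 r) :=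
    ((Polynomial.continuous_aeval R).norm.tendsto 0).mono_left nhdsWithin_le_nhds
  have hnorm : Tendsto (fun z : ℂ => ‖z‖) (𝓝[≠] 0) (𝓝 0) := by
    simpa using (continuous_norm.tendsto (0 : ℂ)).mono_left nhdsWithin_le_nhds
  have hLnorm : Tendsto (fun z : ℂ => 2 * L * ‖z‖) (𝓝[≠] 0) (𝓝 0) := by
    simpa using hnorm.const_mul (2 * L)
  refine ⟨3 * r, by positivity, ?_⟩
  filter_upwards [hRcont.eventually_const_lt (show r / 2 < r by linarith),
    hRcont.eventually_lt_const (show r < 2 * r by linarith),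
    hnorm.eventually_lt_const (show (0 : ℝ) < 1 / 4 by norm_num),
    hLnorm.eventually_lt_const (show (0 : ℝ) < r / 4 by positivity),
    self_mem_nhdsWithin] with z h1 h2 h3 h4 h5
  have hz0 : 0 < ‖z‖ := norm_pos_iff.2 h5
  have hzpow : ‖z ^ d ^ m‖ ≤ ‖z‖ ^ (m + 1) := by
    rw [norm_pow]
    exact pow_le_pow_of_le_one hz0.le (by linarith) hmd
  have hzpow' : ‖z‖ ^ (m + 1) ≤ ‖z‖ := pow_le_of_le_one hz0.le (by linarith) (by omega)
  set g := ∑' k : ℕ, z ^ d ^ k with hg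
  have hsplit := sum_add_tsum_pow_pow hd (show ‖z‖ < 1 by linarith) m
  have htail := norm_tsum_pow_pow_le hd (z := z ^ d ^ m) (by linarith)
  have hgle := norm_tsum_pow_pow_le hd (z := z) (by linarith)
  rw [← hg] at hsplit hgle
  have hTval : aeval z T = ∑ k ∈ Finset.range m, z ^ d ^ k := by simp [hT]
  have hgT : g - aeval z T = ∑' k : ℕ, (z ^ d ^ m) ^ d ^ k := by
    rw [hTval, ← hsplit]; ring
  have hTle : ‖aeval z T‖ ≤ 1 := by
    have : aeval z T = g - (g - aeval z T) := by ring
    rw [this]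
    refine (norm_sub_le _ _).trans ?_
    rw [hgT]
    linarith
  have hdiff : ‖bivar c z g - bivar c z (aeval z T)‖ ≤ L * (2 * ‖z‖ ^ (m + 1)) := by
    refine (hL z g (aeval z T) (by linarith) (by linarith) hTle).trans ?_
    rw [hgT]
    gcongr
    linarith
  have hmain : bivar c z (aeval z T) = z ^ m * aeval z R := by
    have := map_bivar (aeval z : ℚ[X] →ₐ[ℚ] ℂ) c X T
    rw [← hQ, hR, aeval_X, map_mul, map_pow, aeval_X] at this
    exact this.symm
  have hmainnorm : ‖bivar c z (aeval z T)‖ = ‖z‖ ^ m * ‖aeval z R‖ := by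
    rw [hmain, norm_mul, norm_pow]
  have hzm : 0 < ‖z‖ ^ m := by positivity
  have hdiff' : ‖bivar c z g - bivar c z (aeval z T)‖ ≤ ‖z‖ ^ m * (r / 4) := by
    refine hdiff.trans ?_
    rw [pow_succ]
    nlinarith
  constructor
  · intro hzero
    rw [hzero, zero_sub, norm_neg, hmainnorm] at hdiff'
    nlinarith
  · have htri : ‖bivar c z g‖ ≤
        ‖bivar c z g - bivar c z (aeval z T)‖ + ‖bivar c z (aeval z T)‖ := by
      simpa using norm_add_le (bivar c z g - bivar c z (aeval z T)) (bivar c z (aeval z T))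
    have hpow : ‖z‖ ^ m ≤ ‖z‖ ^ M := pow_le_pow_of_le_one hz0.le (by linarith) hMm
    rw [hmainnorm] at htri
    nlinarith

theorem logHeight_one_pair_le {K : Type*} [Field K] [AdmissibleAbsValues K] (x y : K) :
    logHeight ![1, x, y] ≤ logHeight₁ x + logHeight₁ y := by
  rw [logHeight₁_eq_logHeight, logHeight₁_eq_logHeight,
    ← logHeight_fun_mul_eq (x := ![x, 1]) (y := ![y, 1]) (by simp) (by simp)]
  convert logHeight_comp_le (![(1, 1), (0, 1), (1, 0)] : Fin 3 → Fin 2 × Fin 2)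
    (fun a : Fin 2 × Fin 2 => ![x, 1] a.1 * ![y, 1] a.2) using 2
  funext i
  fin_cases i <;> simp

theorem exists_logHeight₁_bivar_le {K : Type*} [Field K] [Algebra ℚ K] [AdmissibleAbsValues K]
    {N : ℕ} (c : Fin (N + 1) → Fin (N + 1) → ℚ) :
    ∃ B : ℝ, ∀ x y : K,
      logHeight₁ (bivar c x y) ≤ B + 2 * N * (logHeight₁ x + logHeight₁ y) := by
  let q : MvPolynomial (Fin 3) K := ∑ i : Fin (N + 1), ∑ j : Fin (N + 1),
    MvPolynomial.C (algebraMap ℚ K (c i j)) * (MvPolynomial.X 0 ^ (2 * N - i - j : ℕ) *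
      (MvPolynomial.X 1 ^ (i : ℕ) * MvPolynomial.X 2 ^ (j : ℕ)))
  have hq : q.IsHomogeneous (2 * N) := by
    refine MvPolynomial.IsHomogeneous.sum _ _ _ fun i _ =>
      MvPolynomial.IsHomogeneous.sum _ _ _ fun j _ => ?_
    have := (MvPolynomial.isHomogeneous_C (Fin 3) (algebraMap ℚ K (c i j))).mul
      ((MvPolynomial.isHomogeneous_X_pow (R := K) (0 : Fin 3) (2 * N - i - j : ℕ)).mul
      ((MvPolynomial.isHomogeneous_X_pow (R := K) (1 : Fin 3) i).mul
        (MvPolynomial.isHomogeneous_X_pow (R := K) (2 : Fin 3) j)))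
    convert this using 1
    omega
  let p : Fin 2 → MvPolynomial (Fin 3) K := ![q, MvPolynomial.X 0 ^ (2 * N)]
  have hp : ∀ i, (p i).IsHomogeneous (2 * N) :=
    Fin.forall_fin_two.2 ⟨hq, MvPolynomial.isHomogeneous_X_pow _ _⟩
  obtain ⟨B, hB⟩ := logHeight_eval_le' hp
  refine ⟨B, fun x y => ?_⟩
  have h := hB ![1, x, y]
  have hval : (fun j => MvPolynomial.eval ![1, x, y] (p j)) = ![bivar c x y, 1] := by
    funext j
    fin_cases j <;> simp [p, q, bivar, Algebra.smul_def]
  rw [hval, ← logHeight₁_eq_logHeight] at h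
  refine h.trans ?_
  push_cast
  gcongr
  exact logHeight_one_pair_le x y

/-- Liouville's inequality; it also holds at `0`, where both sides vanish. -/
theorem neg_logHeight₁_le_log_norm {K : Type*} [Field K] [NumberField K] (φ : K →+* ℂ)
    (x : K) : -logHeight₁ x ≤ Real.log ‖φ x‖ := by
  have key : ∀ y : K, Real.log ‖φ y‖ ≤ logHeight₁ y := by
    intro y
    rw [NumberField.logHeight₁_eq]
    have h1 : Real.log ‖φ y‖ ≤
        (NumberField.InfinitePlace.mk φ).mult *
          Real.posLog (NumberField.InfinitePlace.mk φ y) := by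
      rw [NumberField.InfinitePlace.apply]
      refine (le_max_right 0 _).trans (le_mul_of_one_le_left Real.posLog_nonneg ?_)
      exact_mod_cast NumberField.InfinitePlace.one_le_mult
    have h2 := Finset.single_le_sum
      (f := fun v : NumberField.InfinitePlace K => (v.mult : ℝ) * Real.posLog (v y))
      (fun v _ => mul_nonneg (Nat.cast_nonneg _) Real.posLog_nonneg)
      (Finset.mem_univ (NumberField.InfinitePlace.mk φ))
    have h3 : 0 ≤ ∑ᶠ v : NumberField.FinitePlace K, Real.posLog (v y) :=
      finsum_nonneg fun _ => Real.posLog_nonneg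
    linarith
  have := key x⁻¹
  rw [map_inv₀, norm_inv, Real.log_inv, logHeight₁_inv] at this
  linarith

theorem logHeight₁_sub_sum_le {K : Type*} [Field K] [AdmissibleAbsValues K] {d : ℕ} (hd : 2 ≤ d)
    (a b : K) (k : ℕ) :
    logHeight₁ (b - ∑ j ∈ Finset.range k, a ^ d ^ j) ≤
      d ^ k * (logHeight₁ a + logHeight₁ b + totalWeight K * Real.log 2) := by
  have ha := zero_le_logHeight₁ a
  have hb := zero_le_logHeight₁ b
  have hw : 0 ≤ totalWeight K * Real.log 2 :=
    mul_nonneg (Nat.cast_nonneg _) (Real.log_nonneg (by norm_num))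
  induction k with
  | zero => simp; linarith
  | succ k ih =>
    rw [Finset.sum_range_succ, ← sub_sub]
    have h := logHeight₁_sub_le (b - ∑ j ∈ Finset.range k, a ^ d ^ j) (a ^ d ^ k)
    rw [logHeight₁_pow] at h
    push_cast at h
    have hd2 : (2 : ℝ) ≤ d := by exact_mod_cast hd
    have hdk : (1 : ℝ) ≤ (d : ℝ) ^ k := one_le_pow₀ (by linarith)
    set H := logHeight₁ a + logHeight₁ b + totalWeight K * Real.log 2 with hH
    have h1 : totalWeight K * Real.log 2 + d ^ k * logHeight₁ a ≤ (d : ℝ) ^ k * H := by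
      rw [hH]
      nlinarith
    have h2 : 2 * ((d : ℝ) ^ k * H) ≤ d ^ (k + 1) * H := by
      rw [pow_succ', mul_assoc]
      exact mul_le_mul_of_nonneg_right hd2 (mul_nonneg (by positivity) (by positivity))
    linarith

theorem not_tsum_pow_pow_mem_range {K : Type*} [Field K] [NumberField K] (φ : K →+* ℂ) {d : ℕ}
    (hd : 2 ≤ d) {a b : K} (h0 : a ≠ 0) (h1 : ‖φ a‖ < 1) :
    φ b ≠ ∑' k : ℕ, φ a ^ d ^ k := by
  intro hb
  have hd0 : d ≠ 0 := by omega
  have hpos : 0 < ‖φ a‖ := norm_pos_iff.2 ((map_ne_zero φ).2 h0)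
  set l := -Real.log ‖φ a‖ with hl
  have hlpos : 0 < l := neg_pos.2 (Real.log_neg hpos h1)
  set H := logHeight₁ a + logHeight₁ b + totalWeight K * Real.log 2 with hH
  have hw : 0 ≤ totalWeight K * Real.log 2 :=
    mul_nonneg (Nat.cast_nonneg _) (Real.log_nonneg (by norm_num))
  have haH : logHeight₁ a ≤ H := by
    have := zero_le_logHeight₁ b
    linarith
  obtain ⟨N, hN⟩ := exists_nat_gt ((4 * H + 1) / l)
  rw [div_lt_iff₀ hlpos] at hN
  have hN0 : (1 : ℝ) ≤ N := by
    have hH0 : 0 ≤ H := (zero_le_logHeight₁ a).trans haH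
    have : N ≠ 0 := by
      rintro rfl
      simp only [Nat.cast_zero, zero_mul] at hN
      linarith
    exact_mod_cast Nat.one_le_iff_ne_zero.2 this
  obtain ⟨c, hc0, hcdvd⟩ := exists_bivar_X_pow_dvd (series d) N
  have hcne := bivar_ne_zero hc0 (transcendental_of_expand_eq hd hd0 (expand_series hd hd0))
  obtain ⟨B, hB, hev⟩ := eventually_bivar_ne_zero_and_norm_le hd hcne hcdvd
  obtain ⟨B', hB'⟩ := exists_logHeight₁_bivar_le (K := K) c
  have hdtop : Tendsto (fun k : ℕ => d ^ k) atTop atTop :=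
    tendsto_pow_atTop_atTop_of_one_lt (by omega)
  have hztend : Tendsto (fun k : ℕ => φ a ^ d ^ k) atTop (𝓝[≠] 0) :=
    tendsto_nhdsWithin_iff.2 ⟨(tendsto_pow_atTop_nhds_zero_of_norm_lt_one h1).comp hdtop,
      Eventually.of_forall fun k => pow_ne_zero _ ((map_ne_zero φ).2 h0)⟩
  have hdreal : Tendsto (fun k : ℕ => ((d ^ k : ℕ) : ℝ)) atTop atTop :=
    tendsto_natCast_atTop_atTop.comp hdtop
  obtain ⟨k, ⟨hk0, hkle⟩, hklarge⟩ :=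
    ((hztend.eventually hev).and (hdreal.eventually_gt_atTop (Real.log B + B'))).exists
  set e : K := bivar c (a ^ d ^ k) (b - ∑ j ∈ Finset.range k, a ^ d ^ j) with he
  have hφe : φ e = bivar c (φ a ^ d ^ k) (∑' j : ℕ, (φ a ^ d ^ k) ^ d ^ j) := by
    have := map_bivar φ.toRatAlgHom c (a ^ d ^ k) (b - ∑ j ∈ Finset.range k, a ^ d ^ j)
    simp only [RingHom.toRatAlgHom_apply, map_sub, map_sum, map_pow] at this
    rw [he, this, hb, ← sum_add_tsum_pow_pow hd h1 k, add_sub_cancel_left]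
  rw [← hφe] at hk0 hkle
  have hlower := neg_logHeight₁_le_log_norm φ e
  have hupper : Real.log ‖φ e‖ ≤ Real.log B - N ^ 2 * (d ^ k * l) := by
    refine (Real.log_le_log (norm_pos_iff.2 hk0) hkle).trans (le_of_eq ?_)
    rw [Real.log_mul hB.ne'
        (pow_ne_zero _ (norm_ne_zero_iff.2 (pow_ne_zero _ ((map_ne_zero φ).2 h0)))),
      norm_pow, Real.log_pow, Real.log_pow, hl]
    push_cast
    ring
  have hheight := hB' (a ^ d ^ k) (b - ∑ j ∈ Finset.range k, a ^ d ^ j)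
  have hsum := logHeight₁_sub_sum_le hd a b k
  rw [logHeight₁_pow] at hheight
  push_cast at hheight hklarge
  rw [← hH] at hsum
  set D : ℝ := (d : ℝ) ^ k
  have hD : 0 ≤ D := by positivity
  have hbound : 2 * N * (D * logHeight₁ a + logHeight₁ (b - ∑ j ∈ Finset.range k, a ^ d ^ j)) ≤
      2 * N * (D * H + D * H) := by gcongr
  have hgap : D * 1 ≤ N * D * (N * l - 4 * H) := by
    have : (1 : ℝ) ≤ N * l - 4 * H := by linarith
    have : D * 1 ≤ (N * D) * 1 := by nlinarith
    nlinarith [mul_nonneg (by positivity : (0 : ℝ) ≤ N) hD]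
  nlinarith

end Mahler

/-- **Mahler's theorem.** For a rational integer `d ≥ 2` and an algebraic number
`α` with `0 < |α| < 1`, the number `∑_{k≥0} α^{d^k}` is transcendental. -/
theorem mahler_transcendence
    (d : ℕ) (hd : 2 ≤ d)
    (α : ℂ) (halg : IsAlgebraic ℚ α)
    (h0 : 0 < ‖α‖) (h1 : ‖α‖ < 1) :
    Transcendental ℚ (∑' k : ℕ, α ^ (d ^ k)) := by
  intro hβ
  set β := ∑' k : ℕ, α ^ (d ^ k) with hβdef
  let K := IntermediateField.adjoin ℚ ({α, β} : Set ℂ)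
  have : FiniteDimensional ℚ K := by
    refine IntermediateField.finiteDimensional_adjoin fun x hx => ?_
    rcases hx with rfl | rfl
    · exact halg.isIntegral
    · exact hβ.isIntegral
  have : NumberField K := { to_charZero := inferInstance, to_finiteDimensional := this }
  have hα : α ∈ K := IntermediateField.subset_adjoin _ _ (by simp)
  have hβK : β ∈ K := IntermediateField.subset_adjoin _ _ (by simp)
  exact Mahler.not_tsum_pow_pow_mem_range (algebraMap K ℂ) hd (a := ⟨α, hα⟩) (b := ⟨β, hβK⟩)
    (fun h => norm_pos_iff.1 h0 (congrArg Subtype.val h)) h1 hβdef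
end

section
/- There exists a constant c > 0 with the following property: for every nonzero algebraic integer θ of degree d ≥ 3 which is not a root of unity, one has M(θ) ≥ 1 + c (log log d / log d)^3. -/
namespace Dobrowolski

open Polynomial Finset

section ConfluentVandermonde

variable {R : Type*} [CommRing R] {n : ℕ}

/-- The confluent Vandermonde matrix of a sequence of points: the `i`-th row lists the values at
`z i` of the Hasse derivatives of `1, X, X², …`, of order the number of earlier occurrences of the
point `z i`. -/
noncomputable def confluentVandermonde [DecidableEq R] (z : Fin n → R) : Matrix (Fin n) (Fin n) R :=
  Matrix.of fun i k => (taylor (z i) (X ^ (k : ℕ))).coeff #{m ∈ Iio i | z m = z i}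

/-- The `m`-th element of the Newton basis attached to a sequence of points. -/
noncomputable def newtonPolynomial (z : Fin n → R) (m : Fin n) : R[X] :=
  ∏ k ∈ Iio m, (X - C (z k))

lemma monic_newtonPolynomial (z : Fin n → R) (m : Fin n) : (newtonPolynomial z m).Monic :=
  monic_prod_of_monic _ _ fun k _ => monic_X_sub_C (z k)

lemma natDegree_newtonPolynomial [Nontrivial R] (z : Fin n → R) (m : Fin n) :
    (newtonPolynomial z m).natDegree = m := by
  rw [newtonPolynomial, natDegree_prod_of_monic _ _ fun k _ => monic_X_sub_C (z k)]
  simp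

lemma taylor_newtonPolynomial [DecidableEq R] (z : Fin n → R) (m : Fin n) (r : R) :
    taylor r (newtonPolynomial z m) =
      X ^ #{k ∈ Iio m | z k = r} * ∏ k ∈ Iio m with z k ≠ r, (X + C (r - z k)) := by
  have h : taylor r (newtonPolynomial z m) = ∏ k ∈ Iio m, (X + C (r - z k)) := by
    rw [newtonPolynomial, taylor_apply, Polynomial.prod_comp]
    refine prod_congr rfl fun k _ => ?_
    simp [add_sub_assoc]
  rw [h, ← prod_filter_mul_prod_filter_not (Iio m) (fun k => z k = r)]
  congr 1
  rw [prod_congr rfl (g := fun _ => X), prod_const]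
  intro k hk
  simp [(mem_filter.1 hk).2]

theorem det_confluentVandermonde [Nontrivial R] [DecidableEq R] (z : Fin n → R) :
    (confluentVandermonde z).det = ∏ i, ∏ m ∈ Iio i with z m ≠ z i, (z i - z m) := by
  have key : confluentVandermonde z *
      Matrix.of (fun i j : Fin n => (newtonPolynomial z j).coeff i) =
      Matrix.of fun i j => (taylor (z i) (newtonPolynomial z j)).coeff
        #{m ∈ Iio i | z m = z i} := by
    ext i j
    rw [Matrix.mul_apply, Matrix.of_apply]
    conv_rhs => rw [(newtonPolynomial z j).as_sum_range' n
      (by rw [natDegree_newtonPolynomial]; exact j.2), map_sum, finsetSum_coeff,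
      ← Fin.sum_univ_eq_sum_range
        (fun k => ((taylor (z i)) (monomial k ((newtonPolynomial z j).coeff k))).coeff _)]
    refine sum_congr rfl fun k _ => ?_
    simp [confluentVandermonde, taylor_monomial, mul_comm]
  have hdet := congrArg Matrix.det key
  rw [Matrix.det_mul, Matrix.det_matrixOfPolynomials _ (natDegree_newtonPolynomial z)
    (monic_newtonPolynomial z), mul_one] at hdet
  rw [hdet, Matrix.det_of_isLowerTriangular]
  · refine prod_congr rfl fun i _ => ?_
    rw [Matrix.of_apply, taylor_newtonPolynomial, coeff_X_pow_mul', if_pos le_rfl, Nat.sub_self,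
      coeff_zero_eq_eval_zero, eval_prod]
    simp
  · intro i j hij
    have hij : i < j := hij
    rw [Matrix.of_apply, taylor_newtonPolynomial, coeff_X_pow_mul', if_neg]
    rw [not_le]
    refine card_lt_card (ssubset_iff_of_subset ?_ |>.2 ⟨i, by simpa using hij, by simp⟩)
    intro k hk
    simp only [mem_filter, mem_Iio] at hk ⊢
    exact ⟨hk.1.trans hij, hk.2⟩

end ConfluentVandermonde

lemma norm_det_le_of_norm_row_le {n : ℕ} (A : Matrix (Fin n) (Fin n) ℂ) (b : Fin n → ℝ)
    (h : ∀ i k, ‖A i k‖ ≤ b i) : ‖A.det‖ ≤ (n : ℝ) ^ n * ∏ i, b i := by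
  rw [← Matrix.det_transpose, Matrix.det_apply]
  refine (norm_sum_le _ _).trans ?_
  calc _ ≤ ∑ _σ : Equiv.Perm (Fin n), ∏ i, b i := by
        refine sum_le_sum fun σ _ => ?_
        rw [Units.smul_def, ← Int.cast_smul_eq_zsmul ℂ, norm_smul]
        have : ‖(((Equiv.Perm.sign σ : ℤˣ) : ℤ) : ℂ)‖ = 1 := by
          rcases Int.units_eq_one_or (Equiv.Perm.sign σ) with h | h <;> simp [h]
        rw [this, one_mul, norm_prod]
        exact prod_le_prod (fun _ _ => norm_nonneg _) fun i _ => h i _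
    _ ≤ _ := by
        rw [sum_const, card_univ, Fintype.card_perm, Fintype.card_fin, nsmul_eq_mul]
        have hb : 0 ≤ ∏ i, b i := prod_nonneg fun i _ => (norm_nonneg _).trans (h i i)
        gcongr
        exact_mod_cast Nat.factorial_le_pow n

lemma norm_taylor_X_pow_coeff_le (r : ℂ) {k n : ℕ} (j : ℕ) (hk : k ≤ n) :
    ‖(taylor r (X ^ k)).coeff j‖ ≤ (n : ℝ) ^ j * max 1 ‖r‖ ^ n := by
  rw [taylor_X_pow, coeff_X_add_C_pow, norm_mul, norm_pow, mul_comm, Complex.norm_natCast]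
  have h1 : (1 : ℝ) ≤ max 1 ‖r‖ := le_max_left _ _
  gcongr
  · exact_mod_cast (Nat.choose_le_pow k j).trans (Nat.pow_le_pow_left hk j)
  · calc ‖r‖ ^ (k - j) ≤ max 1 ‖r‖ ^ (k - j) := by gcongr; exact le_max_right _ _
      _ ≤ _ := pow_le_pow_right₀ h1 (by omega)

/-- An upper bound for the product of the nonzero distances within a finite family of points. -/
theorem prod_dist_le_fin {n : ℕ} (z : Fin n → ℂ) :
    (∏ i, ∏ m, if z i = z m then 1 else ‖z i - z m‖) ≤
      (∏ i, ((n : ℝ) ^ #{m | z m = z i} * max 1 ‖z i‖ ^ n)) ^ 2 := by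
  classical
  have hdet : ‖(confluentVandermonde z).det‖ =
      ∏ i, ∏ m ∈ Iio i, if z i = z m then 1 else ‖z i - z m‖ := by
    rw [det_confluentVandermonde, norm_prod]
    refine prod_congr rfl fun i _ => ?_
    rw [norm_prod, prod_filter]
    refine prod_congr rfl fun m _ => ?_
    by_cases h : z i = z m <;> simp [h, eq_comm]
  have hsplit : (∏ i, ∏ m, if z i = z m then 1 else ‖z i - z m‖) =
      ‖(confluentVandermonde z).det‖ ^ 2 := by
    have h1 : ∀ i, (∏ m, if z i = z m then 1 else ‖z i - z m‖) =
        (∏ m ∈ Iio i, if z i = z m then 1 else ‖z i - z m‖) *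
          ∏ m ∈ Ioi i, if z i = z m then 1 else ‖z i - z m‖ := by
      intro i
      rw [← prod_subset (subset_univ (Iio i ∪ Ioi i)), prod_union]
      · exact disjoint_left.2 fun a ha hb => by
          simp only [mem_Iio, mem_Ioi] at ha hb
          exact lt_asymm ha hb
      · intro m _ hm
        have : m = i := by
          simp only [mem_union, mem_Iio, mem_Ioi, not_or, not_lt] at hm
          exact le_antisymm hm.2 hm.1
        simp [this]
    rw [prod_congr rfl fun i _ => h1 i, prod_mul_distrib, sq, hdet]
    congr 1
    rw [prod_comm' (t' := univ) (s' := fun m => Iio m) (by simp)]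
    refine prod_congr rfl fun i _ => prod_congr rfl fun m _ => ?_
    simp only [eq_comm, norm_sub_rev]
  rw [hsplit]
  gcongr
  refine (norm_det_le_of_norm_row_le (confluentVandermonde z)
    (fun i => (n : ℝ) ^ #{m ∈ Iio i | z m = z i} * max 1 ‖z i‖ ^ n) fun i k =>
    norm_taylor_X_pow_coeff_le (z i) _ k.2.le).trans ?_
  calc _ = ∏ i, ((n : ℝ) * ((n : ℝ) ^ #{m ∈ Iio i | z m = z i} * max 1 ‖z i‖ ^ n)) := by
        rw [prod_mul_distrib (f := fun _ => (n : ℝ))]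
        simp
    _ ≤ _ := by
        refine prod_le_prod (fun i _ => by positivity) fun i _ => ?_
        rw [← mul_assoc, ← pow_succ']
        have hn : (1 : ℝ) ≤ n := by exact_mod_cast (Nat.one_le_iff_ne_zero.2 fun h => by
          subst h; exact i.elim0)
        gcongr ?_ * _
        refine pow_le_pow_right₀ hn ?_
        refine card_lt_card (ssubset_iff_of_subset ?_ |>.2 ⟨i, by simp, by simp⟩)
        intro k hk
        simpa using (mem_filter.1 hk).2

/-- An upper bound for the product of the nonzero distances within a finite family of points. -/
theorem prod_dist_le {ι : Type*} [Fintype ι] (z : ι → ℂ) :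
    (∏ i, ∏ m, if z i = z m then 1 else ‖z i - z m‖) ≤
      (∏ i, ((Fintype.card ι : ℝ) ^ #{m | z m = z i} *
        max 1 ‖z i‖ ^ Fintype.card ι)) ^ 2 := by
  have e := Fintype.equivFin ι
  have h := prod_dist_le_fin fun k => z (e.symm k)
  have h1 : ∀ i, #{m | z (e.symm m) = z i} = #{m | z m = z i} := fun i =>
    card_equiv e.symm (by simp)
  simp only [h1] at h
  rw [e.symm.prod_comp (fun i => ∏ m, if z i = z (e.symm m) then 1 else ‖z i - z (e.symm m)‖),
    e.symm.prod_comp (fun i => ((Fintype.card ι : ℝ) ^ #{m | z m = z i} *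
        max 1 ‖z i‖ ^ Fintype.card ι))] at h
  refine le_trans (le_of_eq ?_) h
  exact prod_congr rfl fun i _ =>
    (e.symm.prod_comp fun m => if z i = z m then 1 else ‖z i - z m‖).symm

lemma irreducible_map_rat {f : ℤ[X]} (hf : f.Monic) (hirr : Irreducible f) :
    Irreducible (f.map (algebraMap ℤ ℚ)) :=
  (hf.irreducible_iff_irreducible_map_fraction_map (K := ℚ)).1 hirr

lemma exists_expand_eq_pow_add (f : ℤ[X]) {p : ℕ} (hp : p.Prime) :
    ∃ h : ℤ[X], expand ℤ p f = f ^ p + C (p : ℤ) * h := by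
  have := Fact.mk hp
  have : C (p : ℤ) ∣ expand ℤ p f - f ^ p := by
    have hker : C (p : ℤ) ∣ expand ℤ p f - f ^ p ↔
        (expand ℤ p f - f ^ p).map (Int.castRingHom (ZMod p)) = 0 := by
      rw [C_dvd_iff_dvd_coeff, Polynomial.ext_iff]
      simp only [coeff_map, coeff_zero, eq_intCast, ZMod.intCast_zmod_eq_zero_iff_dvd]
    rw [hker, Polynomial.map_sub, Polynomial.map_pow, map_expand, ZMod.expand_card, sub_self]
  obtain ⟨h, hh⟩ := this
  exact ⟨h, by rw [← hh]; ring⟩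

section Conjugates

variable (K : Type*) [Field K]

open Classical in
/-- The set of roots of an integer polynomial in a field `K`. -/
noncomputable def algRoots (f : ℤ[X]) : Finset K := (f.aroots K).toFinset

variable {K} {f : ℤ[X]}

lemma mem_algRoots (hf : f.Monic) {x : K} : x ∈ algRoots K f ↔ aeval x f = 0 := by
  classical
  rw [algRoots, Multiset.mem_toFinset, mem_aroots']
  exact and_iff_right (hf.map _).ne_zero

lemma isIntegral_of_mem_algRoots (hf : f.Monic) {x : K} (hx : x ∈ algRoots K f) : IsIntegral ℤ x :=
  ⟨f, hf, (mem_algRoots hf).1 hx⟩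

section AlgClosed

variable [IsAlgClosed K]

lemma splits_map_algClosure (f : ℤ[X]) : (f.map (algebraMap ℤ K)).Splits := IsAlgClosed.splits _

variable [Algebra ℚ K]

lemma aroots_nodup (hf : f.Monic) (hirr : Irreducible f) : (f.aroots K).Nodup := by
  rw [← aroots_map K ℚ f]
  exact nodup_aroots_iff_of_splits (irreducible_map_rat hf hirr).ne_zero
    (IsAlgClosed.splits _) |>.2 (irreducible_map_rat hf hirr).separable

lemma algRoots_val (hf : f.Monic) (hirr : Irreducible f) : (algRoots K f).val = f.aroots K := by
  classical
  rw [algRoots, Multiset.toFinset_val, (aroots_nodup hf hirr).dedup]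

lemma card_algRoots (hf : f.Monic) (hirr : Irreducible f) : #(algRoots K f) = f.natDegree := by
  rw [Finset.card, algRoots_val hf hirr, aroots,
    ← (splits_map_algClosure f).natDegree_eq_card_roots, hf.natDegree_map]

lemma aeval_eq_prod_algRoots (hf : f.Monic) (hirr : Irreducible f) (x : K) :
    aeval x f = ∏ α ∈ algRoots K f, (x - α) := by
  rw [Finset.prod, algRoots_val hf hirr, (splits_map_algClosure f).aeval_eq_prod_aroots_of_monic hf]

end AlgClosed

variable [Algebra ℚ K]

lemma algEquiv_mem_algRoots (hf : f.Monic) (σ : K ≃ₐ[ℚ] K) {x : K} :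
    σ x ∈ algRoots K f ↔ x ∈ algRoots K f := by
  rw [mem_algRoots hf, mem_algRoots hf]
  have : aeval (σ x) f = σ (aeval x f) :=
    aeval_algHom_apply ((σ : K →ₐ[ℚ] K).restrictScalars ℤ) x f
  rw [this, map_eq_zero_iff _ σ.injective]

lemma prod_algRoots_comp (hf : f.Monic) (σ : K ≃ₐ[ℚ] K) (g : K → K) :
    ∏ α ∈ algRoots K f, g (σ α) = ∏ α ∈ algRoots K f, g α :=
  prod_equiv σ.toEquiv (fun _ => (algEquiv_mem_algRoots hf σ).symm) fun _ _ => rfl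

variable [IsGalois ℚ K]

lemma one_le_norm_of_fixed {x : K} (hint : IsIntegral ℤ x) (hfix : ∀ σ : K ≃ₐ[ℚ] K, σ x = x)
    (hx : x ≠ 0) (φ : K →+* ℂ) : 1 ≤ ‖φ x‖ := by
  obtain ⟨q, rfl⟩ := (InfiniteGalois.mem_range_algebraMap_iff_fixed x).2 hfix
  have hq : IsIntegral ℤ q := (isIntegral_algebraMap_iff (algebraMap ℚ K).injective).1 hint
  obtain ⟨a, rfl⟩ := IsIntegrallyClosed.isIntegral_iff.1 hq
  have ha : a ≠ 0 := by rintro rfl; simp at hx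
  simpa using (show (1 : ℝ) ≤ |(a : ℝ)| by exact_mod_cast Int.one_le_abs ha)

lemma exists_algEquiv_of_mem_algRoots (hf : f.Monic) (hirr : Irreducible f) {α β : K}
    (hα : α ∈ algRoots K f) (hβ : β ∈ algRoots K f) : ∃ σ : K ≃ₐ[ℚ] K, σ α = β := by
  have h : ∀ x ∈ algRoots K f, f.map (algebraMap ℤ ℚ) = minpoly ℚ x := fun x hx =>
    minpoly.eq_of_irreducible_of_monic (irreducible_map_rat hf hirr)
      (by rw [aeval_map_algebraMap]; exact (mem_algRoots hf).1 hx) (hf.map _)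
  exact isConjRoot_iff_exists_algEquiv.1 ((h β hβ).symm.trans (h α hα))

open Classical in
/-- The product of the nonzero differences between `m`-th and `n`-th powers of the conjugates. -/
lemma one_le_norm_prod_pow_sub_pow (hf : f.Monic) (φ : K →+* ℂ) (m n : ℕ) :
    1 ≤ ∏ α ∈ algRoots K f, ∏ β ∈ algRoots K f,
      if φ α ^ m = φ β ^ n then 1 else ‖φ α ^ m - φ β ^ n‖ := by
  set g : K → K → K := fun α β => if α ^ m = β ^ n then 1 else α ^ m - β ^ n with hg
  have hgσ : ∀ (σ : K ≃ₐ[ℚ] K) α β, σ (g α β) = g (σ α) (σ β) := by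
    intro σ α β
    have : σ α ^ m = σ β ^ n ↔ α ^ m = β ^ n := by
      rw [← map_pow, ← map_pow, σ.injective.eq_iff]
    by_cases h : α ^ m = β ^ n <;> simp [hg, h, this]
  have h := one_le_norm_of_fixed (x := ∏ α ∈ algRoots K f, ∏ β ∈ algRoots K f, g α β) ?_ ?_ ?_ φ
  · refine h.trans_eq ?_
    rw [map_prod, norm_prod]
    refine prod_congr rfl fun α _ => ?_
    rw [map_prod, norm_prod]
    refine prod_congr rfl fun β _ => ?_
    have : φ α ^ m = φ β ^ n ↔ α ^ m = β ^ n := by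
      rw [← map_pow, ← map_pow, φ.injective.eq_iff]
    by_cases h : α ^ m = β ^ n <;> simp [hg, h, this]
  · refine IsIntegral.prod _ fun α hα => IsIntegral.prod _ fun β hβ => ?_
    simp only [hg]
    split_ifs
    · exact isIntegral_one
    · exact ((isIntegral_of_mem_algRoots hf hα).pow m).sub
        ((isIntegral_of_mem_algRoots hf hβ).pow n)
  · intro σ
    simp only [map_prod, hgσ]
    rw [prod_algRoots_comp hf σ fun α => ∏ β ∈ algRoots K f, g α (σ β)]
    exact prod_congr rfl fun α _ => prod_algRoots_comp hf σ fun β => g α β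
  · refine prod_ne_zero_iff.2 fun α _ => prod_ne_zero_iff.2 fun β _ => ?_
    simp only [hg]
    split_ifs with h
    · exact one_ne_zero
    · exact sub_ne_zero.2 h

lemma eq_of_pow_eq_pow_conj (hf : f.Monic) (hirr : Irreducible f)
    (h0 : ∀ α ∈ algRoots K f, α ≠ 0) (hroot : ∀ α ∈ algRoots K f, ∀ k : ℕ, 0 < k → α ^ k ≠ 1)
    {α β : K} (hα : α ∈ algRoots K f) (hβ : β ∈ algRoots K f) {m n : ℕ} (h : α ^ m = β ^ n) :
    m = n := by
  obtain ⟨σ, rfl⟩ := exists_algEquiv_of_mem_algRoots hf hirr hα hβ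
  have hiter : ∀ k : ℕ, α ^ m ^ k = (σ^[k] α) ^ n ^ k := by
    intro k
    induction k with
    | zero => simp
    | succ k ih =>
      have hσ : ∀ x : K, ∀ k l : ℕ, σ^[k] x ^ l = σ^[k] (x ^ l) := fun x k l => by
        rw [← AlgEquiv.coe_pow, map_pow]
      rw [pow_succ m, pow_mul, ih, ← pow_mul, mul_comm (n ^ k), pow_mul, hσ, h, ← hσ,
        ← Function.iterate_succ_apply, ← pow_mul, ← pow_succ']
  obtain ⟨k, hk, hfix⟩ : ∃ k : ℕ, 0 < k ∧ σ^[k] α = α := by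
    have hmem : ∀ k : ℕ, σ^[k] α ∈ algRoots K f := fun k => by
      rw [← AlgEquiv.coe_pow, algEquiv_mem_algRoots hf]; exact hα
    have hninj : ¬ Function.Injective fun k : ℕ => (⟨σ^[k] α, hmem k⟩ : algRoots K f) :=
      not_injective_infinite_finite _
    simp only [Function.Injective, not_forall] at hninj
    obtain ⟨a, b, hab, hne⟩ := hninj
    wlog hlt : a < b generalizing a b
    · exact this b a hab.symm (Ne.symm hne) (by omega)
    refine ⟨b - a, by omega, ?_⟩
    have hab : σ^[a] α = σ^[b] α := Subtype.ext_iff.1 hab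
    have hb : b = a + (b - a) := by omega
    rw [hb, Function.iterate_add_apply] at hab
    exact ((σ.injective.iterate a) hab).symm
  have hpow := hiter k
  rw [hfix] at hpow
  have hord : orderOf α = 0 := by
    rw [orderOf_eq_zero_iff']
    exact fun k hk => hroot α hα k hk
  have hinj : Function.Injective fun k : ℕ => (Units.mk0 α (h0 α hα)) ^ k := by
    rw [injective_pow_iff_not_isOfFinOrder, ← orderOf_eq_zero_iff, ← orderOf_units]
    exact hord
  exact Nat.pow_left_injective hk.ne' (hinj (Units.ext (by simpa using hpow)))

variable [IsAlgClosed K]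

lemma pow_le_norm_prod_pow_sub (hf : f.Monic) (hirr : Irreducible f) (φ : K →+* ℂ) {p : ℕ}
    (hp : p.Prime) (hne : ∀ α ∈ algRoots K f, ∀ β ∈ algRoots K f, α ^ p ≠ β) :
    (p : ℝ) ^ #(algRoots K f) ≤ ∏ α ∈ algRoots K f, ∏ β ∈ algRoots K f, ‖φ α ^ p - φ β‖ := by
  obtain ⟨h, hh⟩ := exists_expand_eq_pow_add f hp
  have key : ∀ α ∈ algRoots K f, ∏ β ∈ algRoots K f, (α ^ p - β) = p * aeval α h := by
    intro α hα
    rw [← aeval_eq_prod_algRoots hf hirr, ← expand_aeval, hh]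
    simp [(mem_algRoots hf).1 hα, hp.ne_zero]
  have hone := one_le_norm_of_fixed (x := ∏ α ∈ algRoots K f, aeval α h) ?_ ?_ ?_ φ
  · calc (p : ℝ) ^ #(algRoots K f)
        ≤ (p : ℝ) ^ #(algRoots K f) * ‖φ (∏ α ∈ algRoots K f, aeval α h)‖ :=
          le_mul_of_one_le_right (by positivity) hone
      _ = ∏ α ∈ algRoots K f, ‖φ (p * aeval α h)‖ := by
          simp only [map_mul, map_natCast, norm_mul, Complex.norm_natCast, prod_mul_distrib,
            prod_const, map_prod, norm_prod]
      _ = _ := by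
          refine prod_congr rfl fun α hα => ?_
          rw [← key α hα, map_prod, norm_prod]
          simp
  · exact IsIntegral.prod _ fun α hα => adjoin_le_integralClosure (isIntegral_of_mem_algRoots hf hα)
      (aeval_mem_adjoin_singleton ℤ α)
  · intro σ
    rw [map_prod]
    rw [← prod_algRoots_comp hf σ fun α => aeval α h]
    exact prod_congr rfl fun α _ =>
      (aeval_algHom_apply ((σ : K →ₐ[ℚ] K).restrictScalars ℤ) α h).symm
  · refine prod_ne_zero_iff.2 fun α hα h0 => ?_
    have := key α hα
    rw [h0, mul_zero, prod_eq_zero_iff] at this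
    obtain ⟨β, hβ, hαβ⟩ := this
    exact hne α hα β hβ (sub_eq_zero.1 hαβ)

/-- Few primes `p` identify the `p`-th powers of distinct conjugates. -/
lemma two_pow_card_le (hf : f.Monic) (hirr : Irreducible f) (h0 : ∀ α ∈ algRoots K f, α ≠ 0)
    (B : Finset ℕ) (hB : ∀ p ∈ B, p.Prime)
    (hbad : ∀ p ∈ B, ∃ α ∈ algRoots K f, ∃ β ∈ algRoots K f, α ≠ β ∧ α ^ p = β ^ p) :
    2 ^ #B ≤ f.natDegree := by
  have hdeg : 0 < f.natDegree := hf.natDegree_pos_of_not_isUnit hirr.not_isUnit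
  rw [← card_algRoots (K := K) hf hirr] at hdeg ⊢
  obtain ⟨θ, hθ⟩ := card_pos.1 hdeg
  have hθ0 := h0 θ hθ
  have hprim : ∀ p ∈ B, ∃ ζ : K, orderOf ζ = p ∧ ζ * θ ∈ algRoots K f := by
    intro p hp
    obtain ⟨α, hα, β, hβ, hne, heq⟩ := hbad p hp
    obtain ⟨σ, hσ⟩ := exists_algEquiv_of_mem_algRoots hf hirr hα hθ
    have := Fact.mk (hB p hp)
    refine ⟨σ β / θ, orderOf_eq_prime ?_ ?_, ?_⟩
    · rw [div_pow, ← map_pow, ← heq, map_pow, hσ, div_self (pow_ne_zero _ hθ0)]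
    · rw [Ne, div_eq_one_iff_eq hθ0, ← hσ, σ.injective.eq_iff]
      exact hne.symm
    · rw [div_mul_cancel₀ _ hθ0, algEquiv_mem_algRoots hf]
      exact hβ
  have hsub : ∀ S ⊆ B, ∃ ζ : K, orderOf ζ = ∏ p ∈ S, p ∧ ζ * θ ∈ algRoots K f := by
    intro S
    induction S using Finset.induction_on with
    | empty => exact fun _ => ⟨1, by simp, by simpa using hθ⟩
    | insert p S hpS ih =>
      intro hS
      obtain ⟨ζ, hζ, hζθ⟩ := ih ((subset_insert _ _).trans hS)
      obtain ⟨ξ, hξ, hξθ⟩ := hprim p (hS (mem_insert_self _ _))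
      obtain ⟨σ, hσ⟩ := exists_algEquiv_of_mem_algRoots hf hirr hθ hζθ
      refine ⟨σ ξ * ζ, ?_, ?_⟩
      · have hσξ : orderOf (σ ξ) = p := by
          rw [← hξ]; exact orderOf_injective (σ : K →* K) σ.injective ξ
        rw [(Commute.all _ _).orderOf_mul_eq_mul_orderOf_of_coprime, hσξ, hζ, prod_insert hpS]
        rw [hσξ, hζ]
        refine Nat.Coprime.prod_right fun q hq => ?_
        refine (Nat.coprime_primes (hB p (hS (mem_insert_self _ _)))
          (hB q (hS (mem_insert_of_mem hq)))).2 ?_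
        rintro rfl
        exact hpS hq
      · rw [mul_assoc, ← hσ, ← map_mul, algEquiv_mem_algRoots hf]
        exact hξθ
  choose! ζ hζ hmem using hsub
  rw [← card_powerset]
  refine card_le_card_of_injOn (fun S => ζ S * θ) (fun S hS => hmem S (mem_powerset.1 hS)) ?_
  intro S hS S' hS' h
  have hS := mem_powerset.1 hS
  have hS' := mem_powerset.1 hS'
  have hz : ζ S = ζ S' := mul_right_cancel₀ hθ0 h
  have hprod : ∏ p ∈ S, p = ∏ p ∈ S', p := by rw [← hζ S hS, ← hζ S' hS', hz]
  rw [← Nat.primeFactors_prod fun p hp => hB p (hS hp),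
    ← Nat.primeFactors_prod fun p hp => hB p (hS' hp), hprod]

end Conjugates

section Inequality

/-- The Mahler measure of `f`, computed from an embedding into `ℂ` of the field `K`. -/
noncomputable def embeddedMahler {K : Type*} [Field K] (φ : K →+* ℂ) (f : ℤ[X]) : ℝ :=
  ∏ α ∈ algRoots K f, max 1 ‖φ α‖

lemma one_le_embeddedMahler {K : Type*} [Field K] (φ : K →+* ℂ) (f : ℤ[X]) :
    1 ≤ embeddedMahler φ f :=
  Finset.prod_induction _ (1 ≤ ·) (fun _ _ => one_le_mul_of_one_le_of_one_le) le_rfl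
    fun _ _ => le_max_left _ _

lemma max_one_pow {x : ℝ} (hx : 0 ≤ x) (k : ℕ) : max 1 (x ^ k) = max 1 x ^ k := by
  rcases le_total x 1 with h | h
  · rw [max_eq_left h, max_eq_left (pow_le_one₀ hx h), one_pow]
  · rw [max_eq_right h, max_eq_right (one_le_pow₀ h)]

/-- The exponents of the powers of the conjugates used as interpolation points: the exponent `1`,
repeated `T` times, and the elements of `S`. -/
def pointExponent (T : ℕ) (S : Finset ℕ) : Fin T ⊕ S → ℕ :=
  Sum.elim (fun _ => 1) (fun p => (p : ℕ))

/-- The number of occurrences of each exponent in `pointExponent`. -/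
def pointMultiplicity (T : ℕ) (S : Finset ℕ) : Fin T ⊕ S → ℕ :=
  Sum.elim (fun _ => T) (fun _ => 1)

lemma sum_pointExponent (T : ℕ) (S : Finset ℕ) :
    ∑ a, pointExponent T S a = T + ∑ p ∈ S, p := by
  simp only [Fintype.sum_sum_type, pointExponent, Sum.elim_inl, Sum.elim_inr]
  rw [sum_coe_sort S fun p => p]
  simp

lemma sum_pointMultiplicity (T : ℕ) (S : Finset ℕ) :
    ∑ a, pointMultiplicity T S a = T ^ 2 + #S := by
  simp [pointMultiplicity, sq]

lemma card_pointExponent_eq_le (T : ℕ) {S : Finset ℕ} (hS : ∀ p ∈ S, p.Prime) (a : Fin T ⊕ S) :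
    #{b | pointExponent T S b = pointExponent T S a} ≤ pointMultiplicity T S a := by
  classical
  rcases a with a | p
  · have : ({b | pointExponent T S b = pointExponent T S (.inl a)} : Finset (Fin T ⊕ S)) ⊆
        univ.image Sum.inl := by
      rintro (b | q) hb
      · simp
      · exact absurd (mem_filter.1 hb).2 (hS q q.2).one_lt.ne'
    exact (card_le_card this).trans (card_image_le.trans (by simp [pointMultiplicity]))
  · have : ({b | pointExponent T S b = pointExponent T S (.inr p)} : Finset (Fin T ⊕ S)) ⊆
        {Sum.inr p} := by
      rintro (b | q) hb
      · exact absurd (mem_filter.1 hb).2 (hS p p.2).one_lt.ne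
      · have : (q : ℕ) = p := (mem_filter.1 hb).2
        simpa using Subtype.ext this
    exact (card_le_card this).trans (by simp [pointMultiplicity])

variable {K : Type*} [Field K] [Algebra ℚ K] [IsGalois ℚ K] {f : ℤ[X]}

lemma eq_of_pow_pointExponent_eq (hf : f.Monic) (hirr : Irreducible f) (φ : K →+* ℂ)
    (h0 : ∀ α ∈ algRoots K f, α ≠ 0)
    (hroot : ∀ α ∈ algRoots K f, ∀ k : ℕ, 0 < k → α ^ k ≠ 1) {S : Finset ℕ}
    (hgood : ∀ p ∈ S, ∀ α ∈ algRoots K f, ∀ β ∈ algRoots K f, α ^ p = β ^ p → α = β)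
    {T : ℕ} {α β : K} (hα : α ∈ algRoots K f) (hβ : β ∈ algRoots K f) {a b : Fin T ⊕ S}
    (h : φ α ^ pointExponent T S a = φ β ^ pointExponent T S b) :
    α = β ∧ pointExponent T S a = pointExponent T S b := by
  rw [← map_pow, ← map_pow, φ.injective.eq_iff] at h
  have hab := eq_of_pow_eq_pow_conj hf hirr h0 hroot hα hβ h
  refine ⟨?_, hab⟩
  rw [← hab] at h
  rcases a with a | p
  · simpa [pointExponent] using h
  · exact hgood p p.2 α hα β hβ h

variable [IsAlgClosed K]

lemma prod_primes_le_prod_dist (hf : f.Monic) (hirr : Irreducible f) (φ : K →+* ℂ)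
    (h0 : ∀ α ∈ algRoots K f, α ≠ 0)
    (hroot : ∀ α ∈ algRoots K f, ∀ k : ℕ, 0 < k → α ^ k ≠ 1)
    {S : Finset ℕ} (hS : ∀ p ∈ S, p.Prime) (T : ℕ) (z : algRoots K f × (Fin T ⊕ S) → ℂ)
    (hz : ∀ i, z i = φ i.1 ^ pointExponent T S i.2) :
    (((∏ p ∈ S, (p : ℝ)) ^ f.natDegree) ^ T) ^ 2 ≤
      ∏ i, ∏ m, if z i = z m then 1 else ‖z i - z m‖ := by
  let G : ℕ → ℕ → ℝ := fun m n => ∏ α ∈ algRoots K f, ∏ β ∈ algRoots K f,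
      if φ α ^ m = φ β ^ n then 1 else ‖φ α ^ m - φ β ^ n‖
  have hG1 : ∀ m n, 1 ≤ G m n := one_le_norm_prod_pow_sub_pow hf φ
  have hGsymm : ∀ m n, G m n = G n m := by
    intro m n
    simp only [G]
    rw [prod_comm]
    refine prod_congr rfl fun α _ => prod_congr rfl fun β _ => ?_
    rw [norm_sub_rev]
    simp only [eq_comm]
  have hGp : ∀ p ∈ S, (p : ℝ) ^ f.natDegree ≤ G p 1 := by
    intro p hp
    have hne : ∀ α ∈ algRoots K f, ∀ β ∈ algRoots K f, α ^ p ≠ β := by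
      intro α hα β hβ h
      have := eq_of_pow_eq_pow_conj hf hirr h0 hroot hα hβ (m := p) (n := 1) (by rw [h, pow_one])
      exact (hS p hp).one_lt.ne' this
    have := pow_le_norm_prod_pow_sub hf hirr φ (hS p hp) hne
    rw [card_algRoots hf hirr] at this
    refine this.trans_eq (prod_congr rfl fun α hα => prod_congr rfl fun β hβ => ?_)
    rw [if_neg, pow_one]
    rw [pow_one, ← map_pow, φ.injective.eq_iff]
    exact hne α hα β hβ
  let w : Fin T ⊕ S → Fin T ⊕ S → ℝ := fun a b =>
    match a, b with
    | .inl _, .inl _ => 1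
    | .inl _, .inr p => (p : ℝ) ^ f.natDegree
    | .inr p, .inl _ => (p : ℝ) ^ f.natDegree
    | .inr _, .inr _ => 1
  have hw : ∀ a b, 0 ≤ w a b := by
    rintro (a | p) (b | q) <;> simp [w]
  have hGw : ∀ a b, w a b ≤ G (pointExponent T S a) (pointExponent T S b) := by
    rintro (a | p) (b | q)
    · exact hG1 _ _
    · rw [hGsymm]; exact hGp q q.2
    · exact hGp p p.2
    · exact hG1 _ _
  calc (((∏ p ∈ S, (p : ℝ)) ^ f.natDegree) ^ T) ^ 2 = ∏ a, ∏ b, w a b := by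
        have hcoe : ∏ p : S, (p : ℝ) = ∏ p ∈ S, (p : ℝ) := prod_coe_sort S fun p => (p : ℝ)
        simp only [Fintype.prod_sum_type, w, prod_const_one, one_mul, mul_one, prod_const,
          card_univ, Fintype.card_fin, prod_pow, sq, hcoe]
    _ ≤ ∏ a, ∏ b, G (pointExponent T S a) (pointExponent T S b) :=
        prod_le_prod (fun a _ => prod_nonneg fun b _ => hw a b) fun a _ =>
          prod_le_prod (fun b _ => hw a b) fun b _ => hGw a b
    _ = ∏ i, ∏ m, if z i = z m then 1 else ‖z i - z m‖ := by
        simp only [hz, Fintype.prod_prod_type_right]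
        refine prod_congr rfl fun a _ => ?_
        rw [prod_comm (t := univ)]
        refine prod_congr rfl fun b _ => ?_
        refine (prod_coe_sort (algRoots K f) fun α => ∏ β ∈ algRoots K f,
          if φ α ^ pointExponent T S a = φ β ^ pointExponent T S b then (1 : ℝ) else
            ‖φ α ^ pointExponent T S a - φ β ^ pointExponent T S b‖).symm.trans ?_
        refine prod_congr rfl fun α _ => ?_
        exact (prod_coe_sort (algRoots K f) fun β =>
          if φ α ^ pointExponent T S a = φ β ^ pointExponent T S b then (1 : ℝ) else
            ‖φ α ^ pointExponent T S a - φ β ^ pointExponent T S b‖).symm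

lemma prod_points_le (hf : f.Monic) (hirr : Irreducible f) (φ : K →+* ℂ)
    (h0 : ∀ α ∈ algRoots K f, α ≠ 0)
    (hroot : ∀ α ∈ algRoots K f, ∀ k : ℕ, 0 < k → α ^ k ≠ 1)
    {S : Finset ℕ} (hS : ∀ p ∈ S, p.Prime)
    (hgood : ∀ p ∈ S, ∀ α ∈ algRoots K f, ∀ β ∈ algRoots K f, α ^ p = β ^ p → α = β)
    (T : ℕ) (z : algRoots K f × (Fin T ⊕ S) → ℂ)
    (hz : ∀ i, z i = φ i.1 ^ pointExponent T S i.2) {N : ℕ} (hN : 0 < N) :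
    ∏ i, ((N : ℝ) ^ #{m | z m = z i} * max 1 ‖z i‖ ^ N) ≤
      ((N : ℝ) ^ (T ^ 2 + #S)) ^ f.natDegree *
        embeddedMahler φ f ^ (N * (T + ∑ p ∈ S, p)) := by
  classical
  have hmult : ∀ i, #{m | z m = z i} ≤ pointMultiplicity T S i.2 := by
    rintro ⟨α, a⟩
    have hsub : ({m | z m = z (α, a)} : Finset _) ⊆
        ({b | pointExponent T S b = pointExponent T S a} : Finset _).image fun b => (α, b) := by
      rintro ⟨β, b⟩ hm
      have hm := (mem_filter.1 hm).2
      rw [hz, hz] at hm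
      obtain ⟨h1, h2⟩ := eq_of_pow_pointExponent_eq hf hirr φ h0 hroot hgood β.2 α.2 hm
      simp only [mem_image, mem_filter, mem_univ, true_and]
      exact ⟨b, h2, by rw [Subtype.ext h1]⟩
    exact (card_le_card hsub).trans (card_image_le.trans (card_pointExponent_eq_le T hS a))
  have hN' : (1 : ℝ) ≤ N := by exact_mod_cast hN
  calc _ ≤ ∏ i : algRoots K f × (Fin T ⊕ S), ((N : ℝ) ^ pointMultiplicity T S i.2 *
          (max 1 ‖φ i.1‖ ^ N) ^ pointExponent T S i.2) := by
        refine prod_le_prod (fun _ _ => by positivity) fun i _ => ?_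
        have hmax : max 1 ‖z i‖ = max 1 ‖φ i.1‖ ^ pointExponent T S i.2 := by
          rw [hz, norm_pow, max_one_pow (norm_nonneg _)]
        rw [pow_right_comm, ← hmax]
        exact mul_le_mul_of_nonneg_right (pow_le_pow_right₀ hN' (hmult i)) (by positivity)
    _ = _ := by
        rw [Fintype.prod_prod_type]
        simp only [prod_mul_distrib, prod_pow_eq_pow_sum, sum_pointMultiplicity,
          sum_pointExponent]
        rw [sum_const, card_univ, Fintype.card_coe, card_algRoots hf hirr, smul_eq_mul,
          mul_comm f.natDegree, pow_mul, embeddedMahler, pow_mul, ← prod_pow, ← prod_pow,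
          prod_coe_sort (algRoots K f) fun α => (max 1 ‖φ α‖ ^ N) ^ (T + ∑ p ∈ S, p)]

/-- The determinant inequality: the interpolation points are the conjugates, with multiplicity `T`,
and their `p`-th powers for `p ∈ S`. -/
theorem prod_primes_pow_le (hf : f.Monic) (hirr : Irreducible f) (φ : K →+* ℂ)
    (h0 : ∀ α ∈ algRoots K f, α ≠ 0)
    (hroot : ∀ α ∈ algRoots K f, ∀ k : ℕ, 0 < k → α ^ k ≠ 1)
    {S : Finset ℕ} (hS : ∀ p ∈ S, p.Prime)
    (hgood : ∀ p ∈ S, ∀ α ∈ algRoots K f, ∀ β ∈ algRoots K f, α ^ p = β ^ p → α = β)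
    {T : ℕ} (hT : 0 < T) :
    ((∏ p ∈ S, (p : ℝ)) ^ f.natDegree) ^ T ≤
      (((f.natDegree * (T + #S) : ℕ) : ℝ) ^ (T ^ 2 + #S)) ^ f.natDegree *
        embeddedMahler φ f ^ (f.natDegree * (T + #S) * (T + ∑ p ∈ S, p)) := by
  have hd : 0 < f.natDegree := hf.natDegree_pos_of_not_isUnit hirr.not_isUnit
  have hN : 0 < f.natDegree * (T + #S) := Nat.mul_pos hd (by omega)
  let z : algRoots K f × (Fin T ⊕ S) → ℂ := fun i => φ i.1 ^ pointExponent T S i.2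
  have hcard : Fintype.card (algRoots K f × (Fin T ⊕ S)) = f.natDegree * (T + #S) := by
    simp [card_algRoots hf hirr]
  have hmain := prod_dist_le z
  rw [hcard] at hmain
  have hM : 0 ≤ embeddedMahler φ f := zero_le_one.trans (one_le_embeddedMahler φ f)
  refine le_of_sq_le_sq ((prod_primes_le_prod_dist hf hirr φ h0 hroot hS T z
    fun _ => rfl).trans (hmain.trans ?_)) (by positivity)
  exact pow_le_pow_left₀ (prod_nonneg fun _ _ => by positivity)
    (prod_points_le hf hirr φ h0 hroot hS hgood T z (fun _ => rfl) hN) 2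

theorem sum_log_primes_le (hf : f.Monic) (hirr : Irreducible f) (φ : K →+* ℂ)
    (h0 : ∀ α ∈ algRoots K f, α ≠ 0)
    (hroot : ∀ α ∈ algRoots K f, ∀ k : ℕ, 0 < k → α ^ k ≠ 1)
    {S : Finset ℕ} (hS : ∀ p ∈ S, p.Prime)
    (hgood : ∀ p ∈ S, ∀ α ∈ algRoots K f, ∀ β ∈ algRoots K f, α ^ p = β ^ p → α = β)
    {T : ℕ} (hT : 0 < T) :
    T * ∑ p ∈ S, Real.log p ≤ (T ^ 2 + #S) * Real.log (f.natDegree * (T + #S)) +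
      (T + #S) * (T + ∑ p ∈ S, (p : ℝ)) * Real.log (embeddedMahler φ f) := by
  have hd : 0 < f.natDegree := hf.natDegree_pos_of_not_isUnit hirr.not_isUnit
  have hM : 0 < embeddedMahler φ f := zero_lt_one.trans_le (one_le_embeddedMahler φ f)
  have hp : ∀ p ∈ S, (p : ℝ) ≠ 0 := fun p hp => by exact_mod_cast (hS p hp).ne_zero
  have hprod : 0 < ∏ p ∈ S, (p : ℝ) :=
    prod_pos fun p hp => by exact_mod_cast (hS p hp).pos
  have hN : (0 : ℝ) < ((f.natDegree * (T + #S) : ℕ) : ℝ) := by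
    exact_mod_cast Nat.mul_pos hd (by omega)
  have h := Real.log_le_log (by positivity)
    (prod_primes_pow_le hf hirr φ h0 hroot hS hgood hT)
  rw [Real.log_mul (by positivity) (by positivity)] at h
  simp only [Real.log_pow] at h
  rw [Real.log_prod hp] at h
  push_cast at h
  have hd' : (0 : ℝ) < f.natDegree := by exact_mod_cast hd
  refine le_of_mul_le_mul_left ?_ hd'
  linear_combination h

end Inequality

section Assembly

lemma exists_galois_algClosed :
    ∃ (K : Type) (_ : Field K) (_ : Algebra ℚ K) (_ : IsGalois ℚ K) (_ : IsAlgClosed K),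
      Nonempty (K →+* ℂ) := by
  let _ : Algebra ℚ (AlgebraicClosure ℚ) := AlgebraicClosure.instAlgebra ℚ
  have h : IsAlgClosure ℚ (AlgebraicClosure ℚ) := inferInstance
  have h2 : Algebra.IsAlgebraic ℚ (AlgebraicClosure ℚ) := inferInstance
  exact ⟨AlgebraicClosure ℚ, inferInstance, inferInstance,
    IsAlgClosure.isGalois ℚ _, inferInstance, ⟨(IsAlgClosed.lift (R := ℚ) (M := ℂ)).toRingHom⟩⟩

lemma roots_map_eq_map_aroots {K : Type*} [Field K] [IsAlgClosed K] (φ : K →+* ℂ) (f : ℤ[X]) :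
    (f.map (Int.castRingHom ℂ)).roots = (f.aroots K).map φ := by
  rw [← (splits_map_algClosure f).roots_map φ, Polynomial.map_map]
  congr 2
  exact RingHom.ext_int _ _

lemma prod_max_one_roots_eq_embeddedMahler {K : Type*} [Field K] [Algebra ℚ K] [IsAlgClosed K]
    {f : ℤ[X]} (hf : f.Monic) (hirr : Irreducible f) (φ : K →+* ℂ) :
    ((f.map (Int.castRingHom ℂ)).roots.map fun z => max 1 ‖z‖).prod = embeddedMahler φ f := by
  rw [roots_map_eq_map_aroots φ f, Multiset.map_map, embeddedMahler,
    Finset.prod, algRoots_val hf hirr]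
  rfl

lemma exists_mem_algRoots_eq {K : Type*} [Field K] [IsAlgClosed K] {f : ℤ[X]} (hf : f.Monic)
    (φ : K →+* ℂ) {θ : ℂ} (hθ : aeval θ f = 0) : ∃ α ∈ algRoots K f, φ α = θ := by
  have hmem : θ ∈ (f.map (Int.castRingHom ℂ)).roots := mem_aroots.2 ⟨hf.ne_zero, hθ⟩
  rw [roots_map_eq_map_aroots φ f, Multiset.mem_map] at hmem
  obtain ⟨α, hα, rfl⟩ := hmem
  exact ⟨α, (mem_algRoots hf).2 (mem_aroots'.1 hα).2, rfl⟩

/-- The inequality between the Mahler measure of `f` and a set of primes, of which all but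
`log₂ (deg f)` can be used. -/
theorem exists_subset_primes_inequality {f : ℤ[X]} (hf : f.Monic) (hirr : Irreducible f)
    {θ : ℂ} (hθ0 : θ ≠ 0) (hθ : aeval θ f = 0) (hunity : ¬ ∃ m : ℕ, 0 < m ∧ θ ^ m = 1)
    {P : Finset ℕ} (hP : ∀ p ∈ P, p.Prime) :
    1 ≤ ((f.map (Int.castRingHom ℂ)).roots.map fun z => max 1 ‖z‖).prod ∧
    ∃ S ⊆ P, 2 ^ #(P \ S) ≤ f.natDegree ∧ ∀ T : ℕ, 0 < T →
      T * ∑ p ∈ S, Real.log p ≤ (T ^ 2 + #S) * Real.log (f.natDegree * (T + #S)) +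
        (T + #S) * (T + ∑ p ∈ S, (p : ℝ)) *
          Real.log ((f.map (Int.castRingHom ℂ)).roots.map fun z => max 1 ‖z‖).prod := by
  classical
  obtain ⟨K, _, _, _, _, ⟨φ⟩⟩ := exists_galois_algClosed
  rw [prod_max_one_roots_eq_embeddedMahler hf hirr φ]
  obtain ⟨α, hα, rfl⟩ := exists_mem_algRoots_eq hf φ hθ
  have h0 : ∀ β ∈ algRoots K f, β ≠ 0 := by
    intro β hβ
    obtain ⟨σ, rfl⟩ := exists_algEquiv_of_mem_algRoots hf hirr hα hβ
    simpa using hθ0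
  have hroot : ∀ β ∈ algRoots K f, ∀ k : ℕ, 0 < k → β ^ k ≠ 1 := by
    intro β hβ k hk h
    obtain ⟨σ, rfl⟩ := exists_algEquiv_of_mem_algRoots hf hirr hα hβ
    rw [← map_pow, map_eq_one_iff σ σ.injective] at h
    exact hunity ⟨k, hk, by rw [← map_pow, h, map_one]⟩
  refine ⟨one_le_embeddedMahler φ f, {p ∈ P | ∀ α ∈ algRoots K f, ∀ β ∈ algRoots K f,
    α ^ p = β ^ p → α = β}, filter_subset _ _, ?_, fun T hT => ?_⟩
  · refine two_pow_card_le hf hirr h0 _ (fun p hp => hP p (mem_sdiff.1 hp).1) fun p hp => ?_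
    obtain ⟨hpP, hp⟩ := mem_sdiff.1 hp
    by_contra! hcon
    refine hp (mem_filter.2 ⟨hpP, fun α hα β hβ h => ?_⟩)
    by_contra hne
    exact hcon α hα β hβ hne h
  · exact sum_log_primes_le hf hirr φ h0 hroot (fun p hp => hP p (mem_filter.1 hp).1)
      (fun p hp => (mem_filter.1 hp).2) hT

end Assembly

section Analytic

open Filter Real Chebyshev

lemma eventually_div_four_le_theta : ∀ᶠ x : ℝ in atTop, x / 4 ≤ θ x := by
  have hlin : ∀ᶠ x : ℝ in atTop, log x ≤ 1 / 100 * x ^ (1 / 4 : ℝ) := by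
    have := (isLittleO_log_rpow_atTop (r := 1 / 4) (by norm_num)).bound
      (show (0 : ℝ) < 1 / 100 by norm_num)
    filter_upwards [this, eventually_ge_atTop 1] with x hx hx1
    rwa [norm_of_nonneg (log_nonneg hx1), norm_of_nonneg (by positivity)] at hx
  filter_upwards [hlin, eventually_ge_atTop 1000] with x hx hx1
  have hθ := theta_ge' (show 1 ≤ x by linarith)
  have hroot1 : x ^ (1 / 4 : ℝ) ≤ √x := by
    rw [sqrt_eq_rpow]
    exact rpow_le_rpow_of_exponent_le (by linarith) (by norm_num)
  have hsq : √x * √x = x := mul_self_sqrt (by linarith)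
  have hlog : log (x + 2) ≤ log x + log 2 := by
    rw [← log_mul (by linarith) (by norm_num)]
    exact log_le_log (by linarith) (by linarith)
  have hs : 0 ≤ √x := sqrt_nonneg x
  have hs1 : √x ≤ x := by
    rw [sqrt_le_left (by linarith)]
    nlinarith
  have h1 : √x * log x ≤ 1 / 100 * x := by nlinarith
  nlinarith [log_two_gt_d9, log_two_lt_d9]

lemma eventually_primeCounting_le_two_mul :
    ∀ᶠ x : ℝ in atTop, (Nat.primeCounting ⌊x⌋₊ : ℝ) ≤ 2 * x / log x := by
  filter_upwards [eventually_primeCounting_le (ε := 1 / 2) (by norm_num),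
    eventually_gt_atTop 1] with x hx hx1
  refine hx.trans (div_le_div_of_nonneg_right ?_ (log_pos hx1).le)
  have : log 4 = 2 * log 2 := by
    rw [show (4 : ℝ) = 2 ^ 2 by norm_num, log_pow]; norm_num
  nlinarith [log_two_lt_d9]

lemma eventually_primes_bounds : ∀ᶠ u : ℝ in atTop, 1 ≤ log u ∧ log u ≤ u ∧
    Nat.primeCounting ⌊32768 * u ^ 2 / log u⌋₊ ≤ 65536 * u ^ 2 / log u ^ 2 ∧
    4096 * u ^ 2 / log u + 2 * u * log (32768 * u ^ 2 / log u) ≤ θ (32768 * u ^ 2 / log u) ∧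
    65792 * u ^ 2 ≤ exp u := by
  have hx : Tendsto (fun u : ℝ => 32768 * u ^ 2 / log u) atTop atTop := by
    refine tendsto_atTop_mono' atTop ?_ tendsto_id
    filter_upwards [tendsto_log_atTop.eventually_ge_atTop 1, eventually_ge_atTop 1] with u hw hu
    rw [id, le_div_iff₀ (by linarith)]
    nlinarith [log_le_self (show 0 ≤ u by linarith)]
  have hsq : ∀ᶠ u : ℝ in atTop, log u ^ 2 ≤ u := by
    have := (isLittleO_pow_log_id_atTop (n := 2)).bound (show (0 : ℝ) < 1 by norm_num)
    filter_upwards [this, eventually_ge_atTop 1] with u hu hu1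
    rwa [one_mul, norm_of_nonneg (by positivity), id, norm_of_nonneg (by linarith)] at hu
  have hexp : ∀ᶠ u : ℝ in atTop, 65792 * u ^ 2 ≤ exp u := by
    filter_upwards [(tendsto_exp_div_pow_atTop 2).eventually_ge_atTop 65792,
      eventually_gt_atTop 0] with u hu hu0
    rwa [le_div_iff₀ (by positivity)] at hu
  filter_upwards [hx.eventually eventually_div_four_le_theta,
    hx.eventually eventually_primeCounting_le_two_mul, hsq, hexp,
    tendsto_log_atTop.eventually_ge_atTop 1, eventually_ge_atTop 32768] with u hθ hπ hsq hexp hw hu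
  have hw0 : 0 < log u := by linarith
  have hwu : log u ≤ u := log_le_self (by linarith)
  set x := 32768 * u ^ 2 / log u with hxdef
  have hxu : u ≤ x := by
    rw [hxdef, le_div_iff₀ hw0]
    nlinarith
  have hx3 : x ≤ u ^ 3 := by
    rw [hxdef, div_le_iff₀ hw0]
    have : 32768 * u ^ 2 ≤ u ^ 3 := by nlinarith [sq_nonneg u]
    nlinarith [show 0 ≤ u ^ 3 by positivity]
  have hlog1 : log u ≤ log x := log_le_log (by linarith) hxu
  have hlog3 : log x ≤ 3 * log u := by
    refine (log_le_log (by linarith) hx3).trans_eq ?_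
    rw [log_pow]; norm_num
  refine ⟨hw, hwu, hπ.trans ?_, le_trans ?_ hθ, hexp⟩
  · calc 2 * x / log x ≤ 2 * x / log u :=
          div_le_div_of_nonneg_left (by linarith) hw0 hlog1
      _ = _ := by rw [hxdef]; field_simp; norm_num
  · have h1 : 4096 * u ^ 2 / log u = x / 8 := by rw [hxdef]; field_simp; norm_num
    have h2 : u * log u ≤ x / 32768 := by
      rw [hxdef, mul_div_assoc, mul_div_cancel_left₀ _ (by norm_num), le_div_iff₀ hw0]
      nlinarith
    nlinarith

lemma le_log_of_prime_inequality {u w T s L P ℓ m : ℝ} (hw : 1 ≤ w) (hwu : w ≤ u)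
    (hT : 128 * u / w ≤ T) (hT' : T ≤ 256 * u / w) (hs0 : 0 ≤ s) (hs : s ≤ 65536 * u ^ 2 / w ^ 2)
    (hL : 4096 * u ^ 2 / w ≤ L) (hP0 : 0 ≤ P) (hP : P ≤ 2147483648 * u ^ 4 / w ^ 3)
    (hℓ : ℓ ≤ 2 * u) (hm : 0 ≤ m) (h : T * L ≤ (T ^ 2 + s) * ℓ + (T + s) * (T + P) * m) :
    1 / 2147483648 * (w / u) ^ 3 ≤ m := by
  have hw0 : 0 < w := by linarith
  have hu0 : 0 < u := by linarith
  have hT0 : 0 ≤ T := le_trans (by positivity) hT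
  set r := u / w with hr
  have hr1 : 1 ≤ r := by rwa [hr, one_le_div hw0]
  have hu : u = r * w := by rw [hr]; field_simp
  have e1 : 128 * u / w = 128 * r := by rw [hr]; ring
  have e2 : 256 * u / w = 256 * r := by rw [hr]; ring
  have e3 : 65536 * u ^ 2 / w ^ 2 = 65536 * r ^ 2 := by rw [hr]; ring
  have e4 : 4096 * u ^ 2 / w = 4096 * (r ^ 2 * w) := by rw [hu]; field_simp
  have e5 : 2147483648 * u ^ 4 / w ^ 3 = 2147483648 * (r ^ 4 * w) := by rw [hu]; field_simp
  rw [e1] at hT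
  rw [e2] at hT'
  rw [e3] at hs
  rw [e4] at hL
  rw [e5] at hP
  have hr2 : r ≤ r ^ 2 := by nlinarith
  have hr4 : r ≤ r ^ 4 * w := by
    have : r * 1 ≤ r ^ 4 * w := mul_le_mul (le_self_pow₀ hr1 (by norm_num)) hw zero_le_one
      (by positivity)
    linarith
  have hlow : 524288 * (r ^ 3 * w) ≤ T * L :=
    calc 524288 * (r ^ 3 * w) = 128 * r * (4096 * (r ^ 2 * w)) := by ring
      _ ≤ T * L := mul_le_mul hT hL (by positivity) hT0
  have hTsq : T ^ 2 ≤ 65536 * r ^ 2 := by nlinarith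
  have hfirst : (T ^ 2 + s) * ℓ ≤ 262144 * (r ^ 3 * w) :=
    calc (T ^ 2 + s) * ℓ ≤ (T ^ 2 + s) * (2 * u) :=
          mul_le_mul_of_nonneg_left hℓ (by positivity)
      _ ≤ (131072 * r ^ 2) * (2 * u) :=
          mul_le_mul_of_nonneg_right (by linarith) (by positivity)
      _ = 262144 * (r ^ 3 * w) := by rw [hu]; ring
  have hsecond : (T + s) * (T + P) * m ≤ 131072 * r ^ 2 * (4294967296 * (r ^ 4 * w)) * m := by
    refine mul_le_mul_of_nonneg_right (mul_le_mul ?_ ?_ (by positivity) (by positivity)) hm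
    · linarith
    · linarith
  have hfin : r ^ 3 * w * 1 ≤ r ^ 3 * w * (2147483648 * r ^ 3 * m) := by nlinarith
  have hfin' := le_of_mul_le_mul_left hfin (by positivity)
  have : (w / u) ^ 3 = 1 / r ^ 3 := by rw [hr]; field_simp
  rw [this, mul_one_div, div_le_iff₀ (by positivity)]
  linarith

theorem exists_forall_le_log_mahler : ∃ u₀ : ℝ, ∀ u ≥ u₀, 1 ≤ log u ∧ log u ≤ u ∧
    ∀ f : ℤ[X], f.Monic → Irreducible f → log f.natDegree ≤ u → ∀ α : ℂ, α ≠ 0 →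
      aeval α f = 0 → (¬ ∃ m : ℕ, 0 < m ∧ α ^ m = 1) →
      1 / 2147483648 * (log u / u) ^ 3 ≤
        log ((f.map (Int.castRingHom ℂ)).roots.map fun z => max 1 ‖z‖).prod := by
  obtain ⟨u₀, hu₀⟩ := eventually_atTop.1 eventually_primes_bounds
  refine ⟨u₀, fun u hu => ?_⟩
  obtain ⟨hw, hwu, hπ, hθ, hexp⟩ := hu₀ u hu
  refine ⟨hw, hwu, fun f hf hirr hd α hα0 hα hunity => ?_⟩
  set x := 32768 * u ^ 2 / log u with hx
  have hw0 : 0 < log u := by linarith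
  have hu0 : 0 < u := by linarith
  have hu1 : 1 ≤ u := by linarith
  have hx0 : 0 ≤ x := by positivity
  have hx1 : 1 ≤ x := by
    rw [hx, one_le_div hw0]
    nlinarith
  have hd0 : 0 < f.natDegree := hf.natDegree_pos_of_not_isUnit hirr.not_isUnit
  obtain ⟨hM, S, hSP, hbad, hS⟩ := exists_subset_primes_inequality hf hirr hα0 hα hunity
    (P := Nat.primesLE ⌊x⌋₊) fun p hp => Nat.prime_of_mem_primesLE hp
  have hple : ∀ p ∈ Nat.primesLE ⌊x⌋₊, (p : ℝ) ≤ x := fun p hp =>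
    (Nat.cast_le.2 (Nat.le_of_mem_primesLE hp)).trans (Nat.floor_le hx0)
  have hcard : (#S : ℝ) ≤ 65536 * u ^ 2 / log u ^ 2 := by
    refine le_trans ?_ hπ
    rw [← Nat.primesLE_card_eq_primeCounting]
    exact_mod_cast card_le_card hSP
  have hbadcard : (#(Nat.primesLE ⌊x⌋₊ \ S) : ℝ) ≤ 2 * u := by
    have h1 : ((2 : ℝ) ^ #(Nat.primesLE ⌊x⌋₊ \ S)) ≤ f.natDegree := by exact_mod_cast hbad
    have h2 := (log_le_log (by positivity) h1).trans hd
    rw [log_pow] at h2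
    nlinarith [log_two_gt_d9, Nat.cast_nonneg (α := ℝ) #(Nat.primesLE ⌊x⌋₊ \ S)]
  have hL : 4096 * u ^ 2 / log u ≤ ∑ p ∈ S, log (p : ℝ) := by
    have hlost : ∑ p ∈ Nat.primesLE ⌊x⌋₊ \ S, log (p : ℝ) ≤ 2 * u * log x :=
      calc ∑ p ∈ Nat.primesLE ⌊x⌋₊ \ S, log (p : ℝ)
          ≤ #(Nat.primesLE ⌊x⌋₊ \ S) • log x := sum_le_card_nsmul _ _ _ fun p hp => by
            have hp := (mem_sdiff.1 hp).1
            exact log_le_log (by exact_mod_cast (Nat.prime_of_mem_primesLE hp).pos) (hple p hp)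
        _ = #(Nat.primesLE ⌊x⌋₊ \ S) * log x := nsmul_eq_mul _ _
        _ ≤ 2 * u * log x := mul_le_mul_of_nonneg_right hbadcard (log_nonneg hx1)
    rw [theta_eq_sum_primesLE, ← sum_sdiff hSP] at hθ
    linarith
  have hP : ∑ p ∈ S, (p : ℝ) ≤ 2147483648 * u ^ 4 / log u ^ 3 :=
    calc ∑ p ∈ S, (p : ℝ) ≤ #S • x := sum_le_card_nsmul _ _ _ fun p hp => hple p (hSP hp)
      _ = #S * x := nsmul_eq_mul _ _
      _ ≤ 65536 * u ^ 2 / log u ^ 2 * x := mul_le_mul_of_nonneg_right hcard hx0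
      _ = 2147483648 * u ^ 4 / log u ^ 3 := by rw [hx]; field_simp; norm_num
  have hr : 1 ≤ u / log u := by rwa [one_le_div hw0]
  obtain ⟨T, hT, hT'⟩ : ∃ T : ℕ, 128 * u / log u ≤ T ∧ T ≤ 256 * u / log u := by
    refine ⟨⌈128 * u / log u⌉₊, Nat.le_ceil _,
      (Nat.ceil_lt_add_one (show 0 ≤ 128 * u / log u by positivity)).le.trans ?_⟩
    rw [mul_div_assoc, mul_div_assoc]
    linarith
  have hTpos : 0 < T := by
    have : (0 : ℝ) < T := lt_of_lt_of_le (by positivity) hT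
    exact_mod_cast this
  have hℓ : log (f.natDegree * (T + #S)) ≤ 2 * u := by
    have hTS : (T + #S : ℝ) ≤ exp u := by
      have h1 : u / log u ≤ u := div_le_self hu0.le hw
      have h2 : u ^ 2 / log u ^ 2 ≤ u ^ 2 :=
        div_le_self (by positivity) (one_le_pow₀ hw)
      rw [mul_div_assoc] at hT' hcard
      nlinarith
    have hpos : (0 : ℝ) < T + #S := by
      exact_mod_cast Nat.add_pos_left hTpos _
    rw [log_mul (by exact_mod_cast hd0.ne') hpos.ne']
    have := log_le_log hpos hTS
    rw [log_exp] at this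
    linarith
  exact le_log_of_prime_inequality hw hwu hT hT' (Nat.cast_nonneg _) hcard hL
    (sum_nonneg fun _ _ => Nat.cast_nonneg _) hP hℓ (log_nonneg hM) (hS _ hTpos)

end Analytic

end Dobrowolski

/-- **Dobrowolski's theorem.** There is a constant `c > 0` such that every
nonzero algebraic integer `θ` of degree `d ≥ 3` (root of a monic irreducible
`f ∈ ℤ[X]` of degree `d`) which is not a root of unity satisfies
`M(θ) ≥ 1 + c (log log d / log d)³`, where
`M(θ) = ∏ max(1, |θ_i|)` over the complex roots `θ_i` of `f`. -/
theorem dobrowolski_lehmer :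
    ∃ c : ℝ, 0 < c ∧
      ∀ (d : ℕ), 3 ≤ d →
        ∀ f : Polynomial ℤ, f.Monic → Irreducible f → f.natDegree = d →
          ∀ θ : ℂ, θ ≠ 0 → Polynomial.aeval θ f = 0 →
            (¬ ∃ m : ℕ, 0 < m ∧ θ ^ m = 1) →
            1 + c * (Real.log (Real.log d) / Real.log d) ^ 3 ≤
              (((f.map (Int.castRingHom ℂ)).roots.map
                fun z => max 1 ‖z‖).prod) := by
  obtain ⟨u₀, hu₀⟩ := Dobrowolski.exists_forall_le_log_mahler
  obtain ⟨hw, hwu, hM₀⟩ := hu₀ u₀ le_rfl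
  have hu₀pos : 0 < Real.log u₀ / u₀ := div_pos (by linarith) (by linarith)
  refine ⟨min (1 / 2147483648) (1 / 2147483648 * (Real.log u₀ / u₀) ^ 3),
    lt_min (by norm_num) (by positivity), ?_⟩
  rintro d hd f hf hirr rfl θ hθ0 hθ hunity
  have hlog : 1 ≤ Real.log f.natDegree := by
    rw [Real.le_log_iff_exp_le (by exact_mod_cast (by omega : 0 < f.natDegree))]
    have : (3 : ℝ) ≤ f.natDegree := by exact_mod_cast hd
    linarith [Real.exp_one_lt_d9]
  have hratio0 : 0 ≤ Real.log (Real.log f.natDegree) / Real.log f.natDegree :=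
    div_nonneg (Real.log_nonneg hlog) (by linarith)
  have hratio1 : Real.log (Real.log f.natDegree) / Real.log f.natDegree ≤ 1 :=
    div_le_one_of_le₀ (Real.log_le_self (by linarith)) (by linarith)
  set M := ((f.map (Int.castRingHom ℂ)).roots.map fun z => max 1 ‖z‖).prod with hM
  have hMpos : 0 < M := Multiset.prod_induction (0 < ·) _ (fun _ _ => mul_pos) one_pos <| by
    simp only [Multiset.mem_map]
    rintro _ ⟨z, -, rfl⟩
    positivity
  suffices h : min (1 / 2147483648) (1 / 2147483648 * (Real.log u₀ / u₀) ^ 3) *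
      (Real.log (Real.log f.natDegree) / Real.log f.natDegree) ^ 3 ≤ Real.log M by
    linarith [Real.log_le_sub_one_of_pos hMpos]
  rcases le_total u₀ (Real.log f.natDegree) with hle | hle
  · exact (mul_le_mul_of_nonneg_right (min_le_left _ _) (by positivity)).trans
      ((hu₀ _ hle).2.2 f hf hirr le_rfl θ hθ0 hθ hunity)
  · refine (mul_le_mul (min_le_right _ _) (pow_le_one₀ hratio0 hratio1) (by positivity)
      (by positivity)).trans ?_
    rw [mul_one]
    exact hM₀ f hf hirr hle θ hθ0 hθ hunity
end
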